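/- For every planar simple graph G₁ on n vertices and every planar simple graph G₂ with 4·|V(G₂)| ≤ n, there exists an injective map f from the vertex set of G₂ to the vertex set of G₁ that generates no shared edge, i.e., for every edge {a,b} of G₂, the pair {f(a), f(b)} is not an edge of G₁. -/

import Mathlib

open Set Bornology

/-- Points of the Euclidean plane. -/
abbrev Pt : Type := ℝ × ℝ

/-- `A` is an arc connecting `p` and `q`: the image of a continuous injective map
from `[0,1]` to the plane sending `0` to `p` and `1` to `q`. -/
def IsArcBetween (A : Set Pt) (p q : Pt) : Prop :=
  ∃ f : ℝ → Pt, ContinuousOn f (Set.Icc 0 1) ∧ Set.InjOn f (Set.Icc 0 1) ∧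
    f 0 = p ∧ f 1 = q ∧ A = f '' Set.Icc 0 1

/-- A planar drawing of a finite simple graph `G`: an injective placement of the
vertices in the plane, together with an arc for each edge joining the images of its
endpoints, such that no arc passes through the image of a vertex other than its two
endpoints, and two distinct arcs intersect only at images of shared endpoints. -/
structure PlanarDrawing {V : Type} [Fintype V] (G : SimpleGraph V) where
  ρ : V → Pt
  inj : Function.Injective ρ
  arc : Sym2 V → Set Pt
  arc_isArc : ∀ u v : V, G.Adj u v → IsArcBetween (arc s(u, v)) (ρ u) (ρ v)
  vertex_mem : ∀ e ∈ G.edgeSet, ∀ w : V, ρ w ∈ arc e → w ∈ e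
  arcs_cross : ∀ e ∈ G.edgeSet, ∀ e' ∈ G.edgeSet, e ≠ e' →
    ∀ x ∈ arc e ∩ arc e', ∃ w : V, w ∈ e ∧ w ∈ e' ∧ x = ρ w

/-- `g` has a continuous logarithm on `S`. -/
def HasLog (S : Set ℂ) (g : ℂ → ℂ) : Prop :=
  ∃ l : ℂ → ℂ, ContinuousOn l S ∧ ∀ z ∈ S, Complex.exp (l z) = g z

lemma HasLog.mono {S T : Set ℂ} {g : ℂ → ℂ} (h : HasLog T g) (hST : S ⊆ T) : HasLog S g := by
  obtain ⟨l, hl, he⟩ := h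
  exact ⟨l, hl.mono hST, fun z hz => he z (hST hz)⟩

lemma HasLog.congr {S : Set ℂ} {g g' : ℂ → ℂ} (h : HasLog S g) (hg : ∀ z ∈ S, g z = g' z) :
    HasLog S g' := by
  obtain ⟨l, hl, he⟩ := h
  exact ⟨l, hl, fun z hz => (he z hz).trans (hg z hz)⟩

lemma HasLog.mul {S : Set ℂ} {g g' : ℂ → ℂ} (h : HasLog S g) (h' : HasLog S g') :
    HasLog S (fun z => g z * g' z) := by
  obtain ⟨l, hl, he⟩ := h
  obtain ⟨l', hl', he'⟩ := h'
  exact ⟨fun z => l z + l' z, hl.add hl', fun z hz => by rw [Complex.exp_add, he z hz, he' z hz]⟩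

lemma hasLog_const (S : Set ℂ) {c : ℂ} (hc : c ≠ 0) : HasLog S (fun _ => c) :=
  ⟨fun _ => Complex.log c, continuousOn_const, fun _ _ => Complex.exp_log hc⟩

lemma hasLog_homotopy (S : Set ℂ) (H : ℝ → ℂ → ℂ)
    (hc : ContinuousOn (fun x : ℝ × ℂ => H x.1 x.2) (Icc 0 1 ×ˢ S))
    (hne : ∀ t ∈ Icc (0:ℝ) 1, ∀ z ∈ S, H t z ≠ 0) (h0 : HasLog S (H 0)) : HasLog S (H 1) := by
  classical
  obtain ⟨l, hl, he⟩ := h0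
  let H' : C(unitInterval × S, {z : ℂ // z ≠ 0}) :=
    ⟨fun x => ⟨H x.1 x.2, hne _ x.1.2 _ x.2.2⟩, by
      refine Continuous.subtype_mk ?_ _
      exact hc.comp_continuous (f := fun x : unitInterval × S => ((x.1 : ℝ), (x.2 : ℂ)))
        (by fun_prop) (fun x => ⟨x.1.2, x.2.2⟩)⟩
  let f : C(S, ℂ) := ⟨fun z => l z, by
    rw [continuousOn_iff_continuous_domRestrict] at hl; exact hl⟩
  have H0 : ∀ a, H' (0, a) = ⟨Complex.exp (f a), Complex.exp_ne_zero _⟩ := by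
    intro a
    apply Subtype.ext
    show H ((0 : unitInterval) : ℝ) a = Complex.exp (l a)
    rw [he a a.2]
    rfl
  let L := Complex.isCoveringMap_exp.liftHomotopy H' f H0
  have hL := Complex.isCoveringMap_exp.liftHomotopy_lifts H' f H0
  refine ⟨fun z => if hz : z ∈ S then L (1, ⟨z, hz⟩) else 0, ?_, ?_⟩
  · rw [continuousOn_iff_continuous_domRestrict]
    have : Continuous (fun z : S => L (1, z)) := by fun_prop
    convert this using 1
    ext z
    simp
  · intro z hz
    have := congrArg Subtype.val (congrFun hL (1, ⟨z, hz⟩))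
    simp only [hz, dif_pos]
    exact this

/-- If `p` and `q` are joined by a path avoiding `S`, the quotient has a logarithm on `S`. -/
lemma hasLog_of_joinedIn {S : Set ℂ} {p q : ℂ} (h : JoinedIn Sᶜ p q) :
    HasLog S (fun z => (z - q) / (z - p)) := by
  obtain ⟨γ, hγ⟩ := h
  have key := hasLog_homotopy S (fun t z => (z - γ.extend t) / (z - p)) ?_ ?_ ?_
  · simpa using key
  · have : ContinuousOn (fun x : ℝ × ℂ => x.2 - γ.extend x.1) (Icc 0 1 ×ˢ S) := by fun_prop
    refine this.div (by fun_prop) ?_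
    rintro ⟨t, z⟩ ⟨-, hz⟩ h0
    have h1 := hγ 0
    rw [γ.source] at h1
    exact h1 (by rw [← sub_eq_zero.mp h0]; exact hz)
  · intro t ht z hz
    refine div_ne_zero ?_ ?_
    · intro h0
      have h1 := hγ ⟨t, ht⟩
      rw [γ.extend_apply ht] at h0
      exact h1 (by rw [← sub_eq_zero.mp h0]; exact hz)
    · intro h0
      have h1 := hγ 0
      rw [γ.source] at h1
      exact h1 (by rw [← sub_eq_zero.mp h0]; exact hz)
  · refine (hasLog_const S one_ne_zero).congr ?_
    intro z hz
    have h1 := hγ 0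
    rw [γ.source] at h1
    have : z - p ≠ 0 := fun h0 => h1 (by rw [← sub_eq_zero.mp h0]; exact hz)
    simp [this]

lemma hasLog_univ {h : ℂ → ℂ} (hc : Continuous h) (hne : ∀ z, h z ≠ 0) : HasLog univ h := by
  have key := hasLog_homotopy univ (fun t z => h (t * z)) (by fun_prop) (fun _ _ _ _ => hne _)
    ((hasLog_const univ (hne 0)).congr (by simp))
  simpa using key

/-- `A` is an arc in `ℂ` from `a` to `b`. -/
def CArc (A : Set ℂ) (a b : ℂ) : Prop :=
  ∃ f : ℝ → ℂ, ContinuousOn f (Icc 0 1) ∧ InjOn f (Icc 0 1) ∧ f 0 = a ∧ f 1 = b ∧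
    A = f '' Icc 0 1

lemma CArc.isCompact {A : Set ℂ} {a b : ℂ} (h : CArc A a b) : IsCompact A := by
  obtain ⟨f, hf, -, -, -, rfl⟩ := h
  exact isCompact_Icc.image_of_continuousOn hf

lemma CArc.left_mem {A : Set ℂ} {a b : ℂ} (h : CArc A a b) : a ∈ A := by
  obtain ⟨f, hf, -, rfl, -, rfl⟩ := h
  exact ⟨0, by simp, rfl⟩

lemma CArc.right_mem {A : Set ℂ} {a b : ℂ} (h : CArc A a b) : b ∈ A := by
  obtain ⟨f, hf, -, -, rfl, rfl⟩ := h
  exact ⟨1, by simp, rfl⟩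

lemma CArc.ne {A : Set ℂ} {a b : ℂ} (h : CArc A a b) : a ≠ b := by
  obtain ⟨f, hf, hi, rfl, rfl, rfl⟩ := h
  intro h
  have := hi (by simp) (by simp) h
  norm_num at this

lemma CArc.symm {A : Set ℂ} {a b : ℂ} (h : CArc A a b) : CArc A b a := by
  obtain ⟨f, hf, hi, rfl, rfl, rfl⟩ := h
  have hm : MapsTo (fun t : ℝ => 1 - t) (Icc 0 1) (Icc 0 1) := by
    intro t ht
    simp only [mem_Icc] at ht ⊢
    constructor <;> linarith [ht.1, ht.2]
  refine ⟨fun t => f (1 - t), hf.comp (by fun_prop) hm, ?_, by simp, by simp, ?_⟩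
  · intro s hs t ht hst
    have := hi (hm hs) (hm ht) hst
    linarith
  · ext x
    constructor
    · rintro ⟨t, ht, rfl⟩
      exact ⟨1 - t, hm ht, by simp⟩
    · rintro ⟨t, ht, rfl⟩
      exact ⟨1 - t, hm ht, rfl⟩

/-- the open arc is connected and nonempty -/
lemma CArc.open_connected {A : Set ℂ} {a b : ℂ} (h : CArc A a b) :
    IsConnected (A \ {a, b}) := by
  obtain ⟨f, hf, hi, rfl, rfl, rfl⟩ := h
  have : f '' Icc 0 1 \ {f 0, f 1} = f '' Ioo 0 1 := by
    ext x
    constructor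
    · rintro ⟨⟨t, ht, rfl⟩, h2⟩
      simp only [mem_insert_iff, mem_singleton_iff, not_or] at h2
      refine ⟨t, ⟨lt_of_le_of_ne ht.1 ?_, lt_of_le_of_ne ht.2 ?_⟩, rfl⟩
      · rintro rfl; exact h2.1 rfl
      · rintro rfl; exact h2.2 rfl
    · rintro ⟨t, ht, rfl⟩
      refine ⟨⟨t, Ioo_subset_Icc_self ht, rfl⟩, ?_⟩
      simp only [mem_insert_iff, mem_singleton_iff, not_or]
      constructor
      · intro h
        have := hi (Ioo_subset_Icc_self ht) (by simp) h
        linarith [ht.1]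
      · intro h
        have := hi (Ioo_subset_Icc_self ht) (by simp) h
        linarith [ht.2]
  rw [this]
  exact (isConnected_Ioo (by norm_num)).image f (hf.mono Ioo_subset_Icc_self)

lemma CArc.joinedIn {A : Set ℂ} {a b : ℂ} (h : CArc A a b) : JoinedIn A a b := by
  obtain ⟨f, hf, hi, rfl, rfl, rfl⟩ := h
  have : IsPathConnected (f '' Icc 0 1) :=
    ((convex_Icc (0:ℝ) 1).isPathConnected ⟨0, by simp⟩).image' hf
  exact this.joinedIn _ ⟨0, by simp, rfl⟩ _ ⟨1, by simp, rfl⟩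

/-- nonvanishing functions have logarithms on arcs -/
lemma CArc.hasLog {A : Set ℂ} {a b : ℂ} (h : CArc A a b) {g : ℂ → ℂ} (hg : ContinuousOn g A)
    (hne : ∀ z ∈ A, g z ≠ 0) : HasLog A g := by
  classical
  obtain ⟨f, hf, hi, rfl, rfl, rfl⟩ := h
  -- continuous inverse
  let F : Icc (0:ℝ) 1 → ℂ := fun t => f t
  have hF : Continuous F := by
    rw [continuousOn_iff_continuous_domRestrict] at hf; exact hf
  have hFi : Function.Injective F := fun s t hst => Subtype.ext (hi s.2 t.2 hst)
  have hemb : Topology.IsClosedEmbedding F := hF.isClosedEmbedding hFi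
  let φ : ℂ → ℝ := Function.invFunOn f (Icc 0 1)
  have hφ : ∀ t ∈ Icc (0:ℝ) 1, φ (f t) = t := fun t ht => hi.leftInvOn_invFunOn ht
  have hφc : ContinuousOn φ (f '' Icc 0 1) := by
    have : range F = f '' Icc 0 1 := by
      ext x; simp [F]
    rw [continuousOn_iff_continuous_domRestrict]
    rw [← this]
    let e := hemb.isEmbedding.toHomeomorph
    have h2 : (range F).domRestrict φ = fun x => ((e.symm x : Icc (0:ℝ) 1) : ℝ) := by
      ext ⟨x, t, rfl⟩
      have : e.symm ⟨F t, t, rfl⟩ = t := by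
        rw [Homeomorph.symm_apply_eq]; rfl
      rw [this]
      exact hφ t t.2
    rw [h2]
    fun_prop
  have hmem : ∀ t ∈ Icc (0:ℝ) 1, ∀ z ∈ f '' Icc (0:ℝ) 1, t * φ z ∈ Icc (0:ℝ) 1 := by
    rintro t ht _ ⟨s, hs, rfl⟩
    rw [hφ s hs]
    exact ⟨mul_nonneg ht.1 hs.1, mul_le_one₀ ht.2 hs.1 hs.2⟩
  have key := hasLog_homotopy (f '' Icc 0 1) (fun t z => g (f (t * φ z))) ?_ ?_ ?_
  · refine key.congr ?_
    rintro _ ⟨s, hs, rfl⟩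
    simp [hφ s hs]
  · have h1 : ContinuousOn (fun x : ℝ × ℂ => x.1 * φ x.2) (Icc 0 1 ×ˢ (f '' Icc 0 1)) := by
      refine continuousOn_fst.mul ?_
      exact hφc.comp continuousOn_snd (fun x hx => hx.2)
    exact hg.comp (hf.comp h1 (fun x hx => hmem _ hx.1 _ hx.2))
      (fun x hx => ⟨_, hmem _ hx.1 _ hx.2, rfl⟩)
  · intro t ht z hz
    exact hne _ ⟨_, hmem _ ht _ hz, rfl⟩
  · have : g (f 0) ≠ 0 := hne _ ⟨0, by simp, rfl⟩
    exact (hasLog_const _ this).congr (by simp)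

/-- two logs of the same function differ by a constant on a preconnected set -/
lemma log_sub_const {S : Set ℂ} (hS : IsPreconnected S) {l l' : ℂ → ℂ} (hl : ContinuousOn l S)
    (hl' : ContinuousOn l' S) (h : ∀ z ∈ S, Complex.exp (l z) = Complex.exp (l' z)) :
    ∀ z ∈ S, ∀ w ∈ S, l z - l' z = l w - l' w := by
  intro z hz w hw
  have hint : ∀ z ∈ S, ∃ n : ℤ, (l z - l' z) / (2 * Real.pi * Complex.I) = n := by
    intro z hz
    obtain ⟨n, hn⟩ := Complex.exp_eq_exp_iff_exists_int.mp (h z hz)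
    refine ⟨n, ?_⟩
    rw [hn, div_eq_iff Complex.two_pi_I_ne_zero]
    ring
  have hc : ContinuousOn (fun z => ((l z - l' z) / (2 * Real.pi * Complex.I)).re) S :=
    Complex.continuous_re.comp_continuousOn ((hl.sub hl').div_const _)
  have hd : IsDiscrete (range ((↑) : ℤ → ℝ)) :=
    (Int.isClosedEmbedding_coe_real.isEmbedding.isDiscrete_range)
  have hm : MapsTo (fun z => ((l z - l' z) / (2 * Real.pi * Complex.I)).re) S
      (range ((↑) : ℤ → ℝ)) := by
    intro z hz
    obtain ⟨n, hn⟩ := hint z hz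
    exact ⟨n, by simp only [hn]; simp⟩
  have key := hS.constant_of_mapsTo hd hc hm hz hw
  obtain ⟨n, hn⟩ := hint z hz
  obtain ⟨k, hk⟩ := hint w hw
  simp only [hn, hk, Complex.intCast_re] at key
  have : (n : ℂ) = k := by exact_mod_cast key
  rw [← hn, ← hk] at this
  exact (div_left_inj' Complex.two_pi_I_ne_zero).mp this

/-- no logarithm of a nontrivial power on a circle -/
lemma not_hasLog_circle {p : ℂ} {R : ℝ} (hR : 0 < R) {n : ℤ} (hn : n ≠ 0) :
    ¬ HasLog (Metric.sphere p R) (fun z => (z - p) ^ n) := by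
  rintro ⟨l, hl, he⟩
  have hsph : ∀ θ : ℂ, θ.im = 0 → p + R * Complex.exp (θ * Complex.I) ∈ Metric.sphere p R := by
    intro θ hθ
    have : θ = (θ.re : ℂ) := by apply Complex.ext <;> simp [hθ]
    rw [this]
    simp [Complex.norm_exp_ofReal_mul_I, abs_of_pos hR]
  let S : Set ℂ := {θ : ℂ | θ.im = 0}
  have hS : IsPreconnected S := by
    have : Convex ℝ S := by
      have := (convex_singleton (𝕜 := ℝ) (0:ℝ)).linear_preimage Complex.imLm
      exact this
    exact this.isPreconnected
  have h := log_sub_const hS (l := fun θ => l (p + R * Complex.exp (θ * Complex.I)))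
    (l' := fun θ => n * (Real.log R + θ * Complex.I)) ?_ (by fun_prop) ?_
      0 (by simp [S]) (2 * Real.pi) (by simp [S])
  · have e1 : Complex.exp (2 * Real.pi * Complex.I) = 1 := Complex.exp_two_pi_mul_I
    simp only [zero_mul, Complex.exp_zero, e1, sub_right_inj, add_zero] at h
    have : (n : ℂ) * (2 * Real.pi * Complex.I) = 0 := by linear_combination -h
    simp [hn, Real.pi_ne_zero] at this
  · exact hl.comp (by fun_prop) (fun θ hθ => hsph θ hθ)
  · intro θ hθ
    rw [he _ (hsph θ hθ), Complex.exp_int_mul, Complex.exp_add, ← Complex.ofReal_exp,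
      Real.exp_log hR]
    simp

/-- `p` and `q` lie in the same component of the complement of `K`. -/
def Conn (K : Set ℂ) (p q : ℂ) : Prop := q ∈ connectedComponentIn Kᶜ p

lemma Conn.left_not_mem {K : Set ℂ} {p q : ℂ} (h : Conn K p q) : p ∉ K := by
  by_contra hp
  rw [Conn, connectedComponentIn_eq_empty (by simpa using hp)] at h
  exact h

lemma Conn.refl {K : Set ℂ} {p : ℂ} (h : p ∉ K) : Conn K p p := mem_connectedComponentIn h

lemma Conn.symm {K : Set ℂ} {p q : ℂ} (h : Conn K p q) : Conn K q p := by
  have h1 := connectedComponentIn_eq h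
  rw [Conn, ← h1]
  exact mem_connectedComponentIn h.left_not_mem

lemma Conn.trans {K : Set ℂ} {p q r : ℂ} (h : Conn K p q) (h' : Conn K q r) : Conn K p r := by
  have h1 := connectedComponentIn_eq h
  rw [Conn, h1]
  exact h'

lemma Conn.right_not_mem {K : Set ℂ} {p q : ℂ} (h : Conn K p q) : q ∉ K := h.symm.left_not_mem

lemma conn_of_preconnected {K C : Set ℂ} (hC : IsPreconnected C) (hCK : ∀ z ∈ C, z ∉ K) {p q : ℂ}
    (hp : p ∈ C) (hq : q ∈ C) : Conn K p q :=
  hC.subset_connectedComponentIn hp hCK hq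

lemma Conn.mono {K K' : Set ℂ} (hK : K ⊆ K') {p q : ℂ} (h : Conn K' p q) : Conn K p q :=
  connectedComponentIn_mono _ (compl_subset_compl.mpr hK) h

lemma Conn.joinedIn {K : Set ℂ} (hK : IsClosed K) {p q : ℂ} (h : Conn K p q) :
    JoinedIn Kᶜ p q := by
  have ho : IsOpen (connectedComponentIn Kᶜ p) := hK.isOpen_compl.connectedComponentIn
  have hc : IsConnected (connectedComponentIn Kᶜ p) :=
    ⟨⟨q, h⟩, isPreconnected_connectedComponentIn⟩
  have := ho.isConnected_iff_isPathConnected.mp hc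
  exact (this.joinedIn p (mem_connectedComponentIn h.left_not_mem) q h).mono
    (connectedComponentIn_subset _ _)

lemma comp_closure {K : Set ℂ} (hK : IsClosed K) {p z : ℂ}
    (hz : z ∈ closure (connectedComponentIn Kᶜ p)) (hzK : z ∉ K) : Conn K p z := by
  have ho : IsOpen (connectedComponentIn Kᶜ z) := hK.isOpen_compl.connectedComponentIn
  obtain ⟨w, hw1, hw2⟩ := mem_closure_iff.mp hz _ ho (mem_connectedComponentIn hzK)
  exact Conn.trans (q := w) hw2 (Conn.symm hw1)

/-- The key lemma: no logarithm of a function with nonzero winding around a bounded component. -/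
lemma no_log_bounded {K : Set ℂ} (hK : IsCompact K) {p : ℂ} (hp : p ∉ K)
    (hb : IsBounded (connectedComponentIn Kᶜ p)) {h : ℂ → ℂ}
    (hc : ContinuousOn h (closure (connectedComponentIn Kᶜ p)))
    (hne : ∀ z ∈ closure (connectedComponentIn Kᶜ p), h z ≠ 0) {n : ℤ} (hn : n ≠ 0) :
    ¬ HasLog K (fun z => (z - p) ^ n * h z) := by
  classical
  rintro ⟨l, hl, he⟩
  set U := connectedComponentIn Kᶜ p with hU
  have ho : IsOpen U := hK.isClosed.isOpen_compl.connectedComponentIn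
  have hpU : p ∈ U := mem_connectedComponentIn hp
  let f : C(K, ℂ) := ⟨fun z => l z, by
    rw [continuousOn_iff_continuous_domRestrict] at hl; exact hl⟩
  obtain ⟨Λ, hΛ⟩ := ContinuousMap.exists_restrict_eq hK.isClosed f
  have hΛ' : ∀ z ∈ K, Λ z = l z := by
    intro z hz
    have := DFunLike.congr_fun hΛ ⟨z, hz⟩
    exact this
  let H : ℂ → ℂ := fun z => if z ∈ U then Complex.exp (Λ z) / h z else (z - p) ^ n
  have hHc : Continuous H := by
    apply continuous_if
    · intro z hz
      have hzc : z ∈ closure U := frontier_subset_closure hz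
      have hzU : z ∉ U := by
        have := hz.2
        rwa [show interior {x | x ∈ U} = U from ho.interior_eq] at this
      have hzK : z ∈ K := by
        by_contra hzK
        exact hzU (comp_closure hK.isClosed hzc hzK)
      rw [hΛ' z hzK, he z hzK]
      field_simp [hne z hzc]
    · refine ContinuousOn.div (by fun_prop) hc hne
    · have : closure {z | z ∉ U} = Uᶜ := ho.isClosed_compl.closure_eq
      rw [this]
      refine ContinuousOn.zpow₀ (by fun_prop) _ ?_
      intro z hz
      left
      intro h0
      exact hz (by rw [sub_eq_zero.mp h0]; exact hpU)
  have hHne : ∀ z, H z ≠ 0 := by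
    intro z
    simp only [H]
    split_ifs with hz
    · exact div_ne_zero (Complex.exp_ne_zero _) (hne z (subset_closure hz))
    · refine zpow_ne_zero _ ?_
      intro h0
      exact hz (by rw [sub_eq_zero.mp h0]; exact hpU)
  have hlog := hasLog_univ hHc hHne
  obtain ⟨R, hR, hUR⟩ := hb.subset_ball_lt 0 p
  refine not_hasLog_circle (p := p) hR hn ((hlog.mono (subset_univ _)).congr ?_)
  intro z hz
  have : z ∉ U := by
    intro hzU
    have := hUR hzU
    rw [Metric.mem_ball] at this
    rw [Metric.mem_sphere] at hz
    linarith
  simp only [H, if_neg this]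

lemma preconnected_outside (R : ℝ) (hR : 0 < R) : IsPreconnected {z : ℂ | R < ‖z‖} := by
  have h1 : IsPreconnected ((Ioi R) ×ˢ (Metric.sphere (0:ℂ) 1)) := by
    refine isPreconnected_Ioi.prod ?_
    refine (isConnected_sphere ?_ 0 zero_le_one).isPreconnected
    rw [Complex.rank_real_complex]
    norm_num
  have h2 := h1.image (fun x : ℝ × ℂ => (x.1 : ℂ) * x.2) (by fun_prop)
  convert h2 using 1
  ext z
  simp only [mem_setOf_eq, mem_image, mem_prod, mem_Ioi, mem_sphere_iff_norm, sub_zero, Prod.exists]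
  constructor
  · intro hz
    have h0 : (‖z‖ : ℂ) ≠ 0 := by
      have : ‖z‖ ≠ 0 := by linarith
      exact_mod_cast this
    refine ⟨‖z‖, z / ‖z‖, ⟨hz, ?_⟩, by field_simp⟩
    rw [norm_div]
    simp
    intro h; simp [h] at h0
  · rintro ⟨r, u, ⟨hr, hu⟩, rfl⟩
    rw [norm_mul, hu, mul_one, Complex.norm_real]
    exact lt_of_lt_of_le hr (le_abs_self r)

lemma conn_of_unbounded {K : Set ℂ} (hK : IsCompact K) {p q : ℂ}
    (hp : ¬ IsBounded (connectedComponentIn Kᶜ p)) (hq : ¬ IsBounded (connectedComponentIn Kᶜ q)) :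
    Conn K p q := by
  obtain ⟨R, hR, hKR⟩ := hK.isBounded.subset_closedBall_lt 0 0
  have aux : ∀ p, ¬ IsBounded (connectedComponentIn Kᶜ p) → ∃ w, R < ‖w‖ ∧ Conn K p w := by
    intro p hp
    by_contra! hcon
    apply hp
    refine Metric.isBounded_closedBall.subset (s := connectedComponentIn Kᶜ p) (t := Metric.closedBall 0 R) ?_
    intro w hw
    by_contra hw2
    simp only [Metric.mem_closedBall, dist_zero_right, not_le] at hw2
    exact hcon w hw2 hw
  obtain ⟨w, hw, hpw⟩ := aux p hp
  obtain ⟨v, hv, hqv⟩ := aux q hq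
  refine hpw.trans (Conn.trans ?_ hqv.symm)
  refine conn_of_preconnected (preconnected_outside R hR) ?_ hw hv
  intro z hz hzK
  have := hKR hzK
  simp only [Metric.mem_closedBall, dist_zero_right] at this
  simp only [mem_setOf_eq] at hz
  linarith

lemma exponent_zero {K : Set ℂ} (hK : IsCompact K) {p q r : ℂ} (hp : p ∉ K) (hq : q ∉ K)
    (hr : r ∉ K) (hpq : ¬ Conn K p q) (hpr : ¬ Conn K p r)
    (hb : IsBounded (connectedComponentIn Kᶜ p)) {n m k : ℤ}
    (h : HasLog K (fun z => (z - p) ^ n * ((z - q) ^ m * (z - r) ^ k))) : n = 0 := by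
  by_contra hn
  have hz : ∀ q, q ∉ K → ¬ Conn K p q → ∀ z ∈ closure (connectedComponentIn Kᶜ p), z - q ≠ 0 := by
    intro q hq hpq z hz h0
    rw [sub_eq_zero] at h0
    subst h0
    exact hpq (comp_closure hK.isClosed hz hq)
  refine no_log_bounded hK hp hb ?_ ?_ hn h
  · refine ContinuousOn.mul ?_ ?_
    · exact ContinuousOn.zpow₀ (by fun_prop) _ (fun z h => Or.inl (hz q hq hpq z h))
    · exact ContinuousOn.zpow₀ (by fun_prop) _ (fun z h => Or.inl (hz r hr hpr z h))
  · intro z h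
    exact mul_ne_zero (zpow_ne_zero _ (hz q hq hpq z h)) (zpow_ne_zero _ (hz r hr hpr z h))

lemma glue_log {K A : Set ℂ} (hK : IsClosed K) (hA : IsClosed A) {g l l' : ℂ → ℂ}
    (hl : ContinuousOn l K) (hl' : ContinuousOn l' A) (he : ∀ z ∈ K, Complex.exp (l z) = g z)
    (he' : ∀ z ∈ A, Complex.exp (l' z) = g z) (hag : ∀ z ∈ K, z ∈ A → l z = l' z) :
    HasLog (K ∪ A) g := by
  classical
  let L : ℂ → ℂ := fun z => if z ∈ K then l z else l' z
  have h1 : ∀ z ∈ K, L z = l z := fun z hz => by simp [L, hz]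
  have h2 : ∀ z ∈ A, L z = l' z := fun z hz => by
    by_cases hzK : z ∈ K
    · rw [h1 z hzK, hag z hzK hz]
    · simp [L, hzK]
  refine ⟨L, ?_, ?_⟩
  · exact (hl.congr h1).union_of_isClosed (hl'.congr h2) hK hA
  · rintro z (hz | hz)
    · rw [h1 z hz, he z hz]
    · rw [h2 z hz, he' z hz]

/-- attaching a pendant arc does not disconnect -/
lemma conn_pendant {K A : Set ℂ} (hK : IsCompact K) {a b : ℂ} (hA : CArc A a b)
    (hKA : ∀ z ∈ K, z ∈ A → z = a) {p q : ℂ} (hpq : Conn K p q) (hpA : p ∉ A) (hqA : q ∉ A) :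
    Conn (K ∪ A) p q := by
  by_contra hcon
  have hp : p ∉ K ∪ A := by simp [hpA, hpq.left_not_mem]
  have hq : q ∉ K ∪ A := by simp [hqA, hpq.right_not_mem]
  have hKA' : IsCompact (K ∪ A) := hK.union hA.isCompact
  have hlog : HasLog (K ∪ A) (fun z => (z - q) / (z - p)) := by
    obtain ⟨l, hl, he⟩ := hasLog_of_joinedIn (hpq.joinedIn hK.isClosed)
    have hnq : ∀ z ∈ A, z - q ≠ 0 := fun z hz h0 => hqA (by rw [← sub_eq_zero.mp h0]; exact hz)
    have hnp : ∀ z ∈ A, z - p ≠ 0 := fun z hz h0 => hpA (by rw [← sub_eq_zero.mp h0]; exact hz)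
    obtain ⟨l', hl', he'⟩ := hA.hasLog (g := fun z => (z - q) / (z - p))
      (ContinuousOn.div (by fun_prop) (by fun_prop) hnp)
      (fun z hz => div_ne_zero (hnq z hz) (hnp z hz))
    by_cases haK : a ∈ K
    · refine glue_log hK.isClosed hA.isCompact.isClosed hl (l' := fun z => l' z + (l a - l' a))
        (hl'.add continuousOn_const) he ?_ ?_
      · intro z hz
        rw [Complex.exp_add, he' z hz, Complex.exp_sub, he a haK, he' a hA.left_mem, div_self,
          mul_one]
        exact div_ne_zero (hnq a hA.left_mem) (hnp a hA.left_mem)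
      · intro z hz hzA
        rw [hKA z hz hzA]; ring
    · refine glue_log hK.isClosed hA.isCompact.isClosed hl hl' he he' ?_
      intro z hz hzA
      exact absurd (hKA z hz hzA ▸ hz) haK
  by_cases hb : IsBounded (connectedComponentIn (K ∪ A)ᶜ p)
  · have := exponent_zero hKA' hp hq hq hcon hcon hb (n := -1) (m := 1) (k := 0)
      (hlog.congr (fun z _ => by simp; field_simp))
    norm_num at this
  · by_cases hb' : IsBounded (connectedComponentIn (K ∪ A)ᶜ q)
    · have hcon' : ¬ Conn (K ∪ A) q p := fun h => hcon h.symm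
      have := exponent_zero hKA' hq hp hp hcon' hcon' hb' (n := 1) (m := -1) (k := 0)
        (hlog.congr (fun z _ => by simp; field_simp))
      norm_num at this
    · exact hcon (conn_of_unbounded hKA' hb hb')

lemma exponents_zero {K : Set ℂ} (hK : IsCompact K) {p q r : ℂ} (hp : p ∉ K) (hq : q ∉ K)
    (hr : r ∉ K) (hpq : ¬ Conn K p q) (hpr : ¬ Conn K p r) (hqr : ¬ Conn K q r) {n m k : ℤ}
    (h : HasLog K (fun z => (z - p) ^ n * ((z - q) ^ m * (z - r) ^ k))) (hs : n + m + k = 0) :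
    n = 0 ∧ m = 0 ∧ k = 0 := by
  have hqp : ¬ Conn K q p := fun h => hpq h.symm
  have hrp : ¬ Conn K r p := fun h => hpr h.symm
  have hrq : ¬ Conn K r q := fun h => hqr h.symm
  have h1 : IsBounded (connectedComponentIn Kᶜ p) → n = 0 :=
    fun hb => exponent_zero hK hp hq hr hpq hpr hb h
  have h2 : IsBounded (connectedComponentIn Kᶜ q) → m = 0 :=
    fun hb => exponent_zero hK hq hp hr hqp hqr hb (h.congr (fun z _ => by ring))
  have h3 : IsBounded (connectedComponentIn Kᶜ r) → k = 0 :=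
    fun hb => exponent_zero hK hr hp hq hrp hrq hb (h.congr (fun z _ => by ring))
  by_cases b1 : IsBounded (connectedComponentIn Kᶜ p) <;>
  by_cases b2 : IsBounded (connectedComponentIn Kᶜ q) <;>
  by_cases b3 : IsBounded (connectedComponentIn Kᶜ r)
  · exact ⟨h1 b1, h2 b2, h3 b3⟩
  · have := h1 b1; have := h2 b2; omega
  · have := h1 b1; have := h3 b3; omega
  · exact absurd (conn_of_unbounded hK b2 b3) hqr
  · have := h2 b2; have := h3 b3; omega
  · exact absurd (conn_of_unbounded hK b1 b3) hpr
  · exact absurd (conn_of_unbounded hK b1 b2) hpq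
  · exact absurd (conn_of_unbounded hK b1 b2) hpq

/-- an arc splits a component into at most two -/
lemma three_points {K A : Set ℂ} (hK : IsCompact K) {a b : ℂ} (hA : CArc A a b)
    (haK : a ∈ K) (hbK : b ∈ K)
    (hKA : ∀ z ∈ K, z ∈ A → z = a ∨ z = b) {p q r : ℂ} (hpq : Conn K p q) (hqr : Conn K q r)
    (hpA : p ∉ A) (hqA : q ∉ A) (hrA : r ∉ A) :
    Conn (K ∪ A) p q ∨ Conn (K ∪ A) p r ∨ Conn (K ∪ A) q r := by
  by_contra! hcon
  obtain ⟨c1, c2, c3⟩ := hcon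
  have hp : p ∉ K ∪ A := by simp [hpA, hpq.left_not_mem]
  have hq : q ∉ K ∪ A := by simp [hqA, hpq.right_not_mem]
  have hr : r ∉ K ∪ A := by simp [hrA, hqr.right_not_mem]
  have hKA' : IsCompact (K ∪ A) := hK.union hA.isCompact
  have hn : ∀ p, p ∉ K ∪ A → ∀ z ∈ K ∪ A, z - p ≠ 0 :=
    fun p hp z hz h0 => hp (by rw [← sub_eq_zero.mp h0]; exact hz)
  have aux : ∀ p q : ℂ, Conn K p q → p ∉ K ∪ A → q ∉ K ∪ A →
      ∃ (l l' : ℂ → ℂ) (d : ℤ), ContinuousOn l K ∧ ContinuousOn l' A ∧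
      (∀ z ∈ K, Complex.exp (l z) = (z - q) / (z - p)) ∧
      (∀ z ∈ A, Complex.exp (l' z) = (z - q) / (z - p)) ∧ l a = l' a ∧
      l b = l' b + d * (2 * Real.pi * Complex.I) := by
    intro p q hpq hp hq
    obtain ⟨l, hl, he⟩ := hasLog_of_joinedIn (hpq.joinedIn hK.isClosed)
    have hnq : ∀ z ∈ A, z - q ≠ 0 := fun z hz => hn q hq z (Or.inr hz)
    have hnp : ∀ z ∈ A, z - p ≠ 0 := fun z hz => hn p hp z (Or.inr hz)
    obtain ⟨l', hl', he'⟩ := hA.hasLog (g := fun z => (z - q) / (z - p))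
      (ContinuousOn.div (by fun_prop) (by fun_prop) hnp)
      (fun z hz => div_ne_zero (hnq z hz) (hnp z hz))
    have he2 : ∀ z ∈ A, Complex.exp (l' z + (l a - l' a)) = (z - q) / (z - p) := by
      intro z hz
      rw [Complex.exp_add, he' z hz, Complex.exp_sub, he a haK, he' a hA.left_mem, div_self,
          mul_one]
      exact div_ne_zero (hnq a hA.left_mem) (hnp a hA.left_mem)
    obtain ⟨d, hd⟩ := Complex.exp_eq_exp_iff_exists_int.mp
      ((he b hbK).trans (he2 b hA.right_mem).symm)
    exact ⟨l, fun z => l' z + (l a - l' a), d, hl, hl'.add continuousOn_const, he, he2, by ring, hd⟩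
  obtain ⟨l1, m1, d1, hl1, hm1, el1, em1, a1, b1⟩ := aux p q hpq hp hq
  obtain ⟨l2, m2, d2, hl2, hm2, el2, em2, a2, b2⟩ := aux q r hqr hq hr
  have key : ∀ x y : ℤ, x * d1 + y * d2 = 0 → x = 0 ∧ y = 0 := by
    intro x y hxy
    have hlog : HasLog (K ∪ A) (fun z => (z - p) ^ (-x) * ((z - q) ^ (x - y) * (z - r) ^ y)) := by
      have hform : ∀ z ∈ K ∪ A, ((z - q) / (z - p)) ^ x * ((z - r) / (z - q)) ^ y =
          (z - p) ^ (-x) * ((z - q) ^ (x - y) * (z - r) ^ y) := by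
        intro z hz
        have := hn p hp z hz
        have := hn q hq z hz
        have := hn r hr z hz
        rw [div_zpow, div_zpow, zpow_neg, zpow_sub₀ (hn q hq z hz)]
        field_simp
      refine HasLog.congr (g := fun z => ((z - q) / (z - p)) ^ x * ((z - r) / (z - q)) ^ y) ?_ hform
      refine glue_log hK.isClosed hA.isCompact.isClosed (l := fun z => x * l1 z + y * l2 z)
        (l' := fun z => x * m1 z + y * m2 z) (by fun_prop) (by fun_prop) ?_ ?_ ?_
      · intro z hz
        rw [Complex.exp_add, Complex.exp_int_mul, Complex.exp_int_mul, el1 z hz, el2 z hz]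
      · intro z hz
        rw [Complex.exp_add, Complex.exp_int_mul, Complex.exp_int_mul, em1 z hz, em2 z hz]
      · intro z hz hzA
        rcases hKA z hz hzA with rfl | rfl
        · simp only [a1, a2]
        · simp only [b1, b2]
          have : (x : ℂ) * d1 + y * d2 = 0 := by exact_mod_cast hxy
          linear_combination (2 * Real.pi * Complex.I) * this
    have := exponents_zero hKA' hp hq hr c1 c2 c3 hlog (by ring)
    omega
  by_cases h0 : d1 = 0 ∧ d2 = 0
  · have := key 1 0 (by simp [h0.1])
    omega
  · have := key d2 (-d1) (by ring)
    omega

lemma HasLog.inv {S : Set ℂ} {g : ℂ → ℂ} (h : HasLog S g) : HasLog S (fun z => (g z)⁻¹) := by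
  obtain ⟨l, hl, he⟩ := h
  exact ⟨fun z => - l z, hl.neg, fun z hz => by rw [Complex.exp_neg, he z hz]⟩

lemma not_log_puncture {a b : ℂ} (hab : a ≠ b) :
    ¬ HasLog ({a, b}ᶜ) (fun z => (z - b) / (z - a)) := by
  intro h
  have hd : 0 < dist a b := dist_pos.mpr hab
  set R := dist a b / 2 with hR
  have hRp : 0 < R := by positivity
  have hsub : Metric.sphere a R ⊆ {a, b}ᶜ := by
    rintro z hz (rfl | rfl)
    · simp at hz; linarith
    · simp only [Metric.mem_sphere] at hz
      rw [dist_comm] at hz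
      linarith
  have h1 : HasLog (Metric.sphere a R) (fun z => z - b) := by
    have := hasLog_homotopy (Metric.sphere a R) (fun t z => a + t * (z - a) - b) (by fun_prop) ?_ ?_
    · simpa using this
    · intro t ht z hz h0
      have e : b - a = t * (z - a) := by linear_combination -h0
      have e2 : ‖b - a‖ = t * R := by
        rw [e, norm_mul, Complex.norm_real, Real.norm_of_nonneg ht.1, ← hz, dist_eq_norm]
      rw [← dist_eq_norm, dist_comm] at e2
      nlinarith [ht.2]
    · refine (hasLog_const _ (sub_ne_zero.mpr hab)).congr ?_
      simp
  have h2 := (h.mono hsub).mul h1.inv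
  refine not_hasLog_circle (p := a) hRp (n := -1) (by norm_num) (h2.congr ?_)
  intro z hz
  have h3 : z - b ≠ 0 := fun h0 => hsub hz (Or.inr (sub_eq_zero.mp h0))
  have h4 : z - a ≠ 0 := fun h0 => hsub hz (Or.inl (sub_eq_zero.mp h0))
  simp
  field_simp

/-- an arc closing a cycle disconnects -/
lemma arc_splits {K A : Set ℂ} (hK : IsClosed K) {a b c : ℂ} (hA : CArc A a b)
    (hab : JoinedIn K a b)
    (hKA : ∀ z ∈ K, z ∈ A → z = a ∨ z = b) (hc : c ∈ A \ {a, b}) :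
    ∃ p q, Conn K c p ∧ Conn K c q ∧ p ∉ A ∧ q ∉ A ∧ ¬ Conn (K ∪ A) p q := by
  classical
  by_contra! hcon
  have hcK : c ∉ K := fun h => by
    rcases hKA c h hc.1 with h | h
    · exact hc.2 (Or.inl h)
    · exact hc.2 (Or.inr h)
  set F := connectedComponentIn Kᶜ c with hF
  have hFo : IsOpen F := hK.isOpen_compl.connectedComponentIn
  have hpre : IsPreconnected (F \ A) := by
    rcases (F \ A).eq_empty_or_nonempty with h | ⟨p, hp⟩
    · rw [h]; exact isPreconnected_empty
    · have : F \ A = connectedComponentIn (K ∪ A)ᶜ p := by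
        apply Subset.antisymm
        · intro q hq
          exact hcon p q hp.1 hq.1 hp.2 hq.2
        · intro q hq
          have h1 : Conn (K ∪ A) p q := hq
          exact ⟨Conn.trans (K := K) (q := p) hp.1 (h1.mono subset_union_left),
            fun h => h1.right_not_mem (Or.inr h)⟩
      rw [this]
      exact isPreconnected_connectedComponentIn
  obtain ⟨l, hl, he⟩ := hasLog_of_joinedIn (S := Aᶜ) (p := a) (q := b) (by
    rw [compl_compl]; exact hA.joinedIn)
  obtain ⟨l', hl', he'⟩ := (hasLog_of_joinedIn (S := Kᶜ) (p := a) (q := b) (by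
    rw [compl_compl]; exact hab))
  have hFK : F ⊆ Kᶜ := connectedComponentIn_subset _ _
  obtain ⟨k, hk, hk1⟩ : ∃ k : ℂ, (∀ z ∈ F \ A, l z = l' z + k) ∧ Complex.exp k = 1 := by
    rcases (F \ A).eq_empty_or_nonempty with h | ⟨p, hp⟩
    · exact ⟨0, by simp [h], by simp⟩
    · have := log_sub_const hpre (hl.mono (fun z hz => hz.2)) (hl'.mono (fun z hz => hFK hz.1))
        (fun z hz => by rw [he z hz.2, he' z (hFK hz.1)])
      refine ⟨l p - l' p, fun z hz => ?_, ?_⟩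
      · rw [← this z hz p hp]; ring
      · rw [Complex.exp_sub, he p hp.2, he' p (hFK hp.1), div_self]
        rw [← he p hp.2]
        exact Complex.exp_ne_zero _
  have hAF : ∀ z ∈ A, z ∉ ({a, b} : Set ℂ) → z ∈ F := by
    intro z hz hz2
    refine conn_of_preconnected hA.open_connected.isPreconnected ?_ hc ⟨hz, hz2⟩
    intro w hw hwK
    exact hw.2 (hKA w hwK hw.1)
  let L : ℂ → ℂ := fun z => if z ∈ A then l' z + k else l z
  have hLF : ∀ z ∈ F, L z = l' z + k := by
    intro z hz
    by_cases hzA : z ∈ A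
    · simp [L, hzA]
    · simp only [L, hzA, if_false]; exact hk z ⟨hz, hzA⟩
  have hLA : ∀ z ∈ Aᶜ, L z = l z := by
    intro z hz
    simp only [L, if_neg hz]
  refine not_log_puncture hA.ne ⟨L, ?_, ?_⟩
  · intro z hz
    apply ContinuousAt.continuousWithinAt
    by_cases hzA : z ∈ A
    · have hzF := hAF z hzA hz
      have h1 : ContinuousOn L F :=
        ((hl'.mono hFK).add continuousOn_const).congr hLF
      exact h1.continuousAt (hFo.mem_nhds hzF)
    · have h1 : ContinuousOn L Aᶜ := hl.congr hLA
      exact h1.continuousAt (hA.isCompact.isClosed.isOpen_compl.mem_nhds hzA)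
  · intro z hz
    by_cases hzA : z ∈ A
    · have hzF := hAF z hzA hz
      rw [hLF z hzF, Complex.exp_add, hk1, mul_one, he' z (hFK hzF)]
    · rw [hLA z hzA, he z hzA]

/-- a component is not covered by an arc -/
lemma exists_off_arc {K A : Set ℂ} (hK : IsClosed K) {a b c : ℂ} (hA : CArc A a b)
    (hKA : ∀ z ∈ K, z ∈ A → z = a ∨ z = b) (hc : c ∈ A \ {a, b}) :
    ∃ p, Conn K c p ∧ p ∉ A := by
  by_contra! hcon
  have hcK : c ∉ K := fun h => hc.2 (hKA c h hc.1)
  set F := connectedComponentIn Kᶜ c with hF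
  have hFo : IsOpen F := hK.isOpen_compl.connectedComponentIn
  have hFA : F ⊆ A := fun z hz => hcon z hz
  have h1 : IsPreconnected ({a, b}ᶜ : Set ℂ) := by
    have : ({a, b} : Set ℂ).Countable := by simp
    refine (this.isPathConnected_compl_of_one_lt_rank ?_).isConnected.isPreconnected
    rw [Complex.rank_real_complex]
    norm_num
  have h2 : ({a, b}ᶜ : Set ℂ) ⊆ F := by
    refine h1.subset_of_closure_inter_subset hFo ⟨c, hc.2, mem_connectedComponentIn hcK⟩ ?_
    rintro z ⟨hz1, hz2⟩
    have hzA : z ∈ A := closure_minimal hFA hA.isCompact.isClosed hz1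
    by_cases hzK : z ∈ K
    · exact absurd (hKA z hzK hzA) hz2
    · exact comp_closure hK hz1 hzK
  have h3 : A = univ := by
    apply eq_univ_of_forall
    intro z
    by_cases hz : z ∈ ({a, b} : Set ℂ)
    · rcases hz with rfl | hz
      · exact hA.left_mem
      · rw [hz]; exact hA.right_mem
    · exact hFA (h2 hz)
  have := hA.isCompact
  rw [h3] at this
  exact noncompact_univ ℂ this

/-- Planar drawings in `ℂ`. -/
structure CDrawing {V : Type} (G : SimpleGraph V) where
  ρ : V → ℂ
  inj : Function.Injective ρ
  arc : Sym2 V → Set ℂ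
  arc_isArc : ∀ u v : V, G.Adj u v → CArc (arc s(u, v)) (ρ u) (ρ v)
  vertex_mem : ∀ e ∈ G.edgeSet, ∀ w : V, ρ w ∈ arc e → w ∈ e
  arcs_cross : ∀ e ∈ G.edgeSet, ∀ e' ∈ G.edgeSet, e ≠ e' →
    ∀ x ∈ arc e ∩ arc e', ∃ w : V, w ∈ e ∧ w ∈ e' ∧ x = ρ w

namespace CDrawing

variable {V : Type} {G : SimpleGraph V} (D : CDrawing G)

/-- the point set of the drawing restricted to the edges in `E` -/
def K (E : Finset (Sym2 V)) : Set ℂ := range D.ρ ∪ ⋃ e ∈ E, D.arc e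

lemma vertex_mem_K (E : Finset (Sym2 V)) (v : V) : D.ρ v ∈ D.K E := Or.inl ⟨v, rfl⟩

lemma arc_subset_K {E : Finset (Sym2 V)} {e : Sym2 V} (he : e ∈ E) : D.arc e ⊆ D.K E :=
  fun _ hz => Or.inr (mem_iUnion₂.mpr ⟨e, he, hz⟩)

lemma mem_K {E : Finset (Sym2 V)} {z : ℂ} :
    z ∈ D.K E ↔ (∃ v, D.ρ v = z) ∨ ∃ e ∈ E, z ∈ D.arc e := by
  simp [K]

lemma K_mono {E E' : Finset (Sym2 V)} (h : E ⊆ E') : D.K E ⊆ D.K E' := by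
  intro z hz
  rw [mem_K] at hz ⊢
  rcases hz with h1 | ⟨e, he, h1⟩
  · exact Or.inl h1
  · exact Or.inr ⟨e, h he, h1⟩

lemma K_insert [DecidableEq V] (E : Finset (Sym2 V)) (e : Sym2 V) :
    D.K (insert e E) = D.K E ∪ D.arc e := by
  ext z
  simp only [mem_union, mem_K, Finset.mem_insert, exists_eq_or_imp]
  rw [or_assoc, or_comm (b := ∃ a ∈ E, z ∈ D.arc a)]

lemma arc_compact {e : Sym2 V} (he : e ∈ G.edgeSet) : IsCompact (D.arc e) := by
  induction e with
  | h u v => exact (D.arc_isArc u v he).isCompact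

lemma K_compact [Finite V] {E : Finset (Sym2 V)} (hE : ∀ e ∈ E, e ∈ G.edgeSet) : IsCompact (D.K E) := by
  refine (finite_range D.ρ).isCompact.union ?_
  exact E.isCompact_biUnion (fun e he => D.arc_compact (hE e he))

lemma K_arc {E : Finset (Sym2 V)} (hE : ∀ e ∈ E, e ∈ G.edgeSet) {u v : V} (huv : G.Adj u v)
    (hn : s(u, v) ∉ E) : ∀ z ∈ D.K E, z ∈ D.arc s(u, v) → z = D.ρ u ∨ z = D.ρ v := by
  intro z hz hzA
  rcases D.mem_K.mp hz with ⟨w, rfl⟩ | ⟨e, he, hze⟩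
  · have := D.vertex_mem _ huv w hzA
    rcases Sym2.mem_iff.mp this with rfl | rfl <;> simp
  · obtain ⟨w, hw1, hw2, rfl⟩ := D.arcs_cross e (hE e he) s(u, v) huv
      (fun h => hn (h ▸ he)) z ⟨hze, hzA⟩
    rcases Sym2.mem_iff.mp hw2 with rfl | rfl <;> simp

lemma joined_of_reachable {E : Finset (Sym2 V)} (hE : ∀ e ∈ E, e ∈ G.edgeSet) {u v : V}
    (h : (SimpleGraph.fromEdgeSet (E : Set (Sym2 V))).Reachable u v) :
    JoinedIn (D.K E) (D.ρ u) (D.ρ v) := by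
  obtain ⟨w⟩ := h
  induction w with
  | nil => exact JoinedIn.refl (D.vertex_mem_K E _)
  | cons h _ ih =>
    refine JoinedIn.trans ?_ ih
    have he := ((SimpleGraph.fromEdgeSet_adj _).mp h).1
    exact (D.arc_isArc _ _ (hE _ he)).joinedIn.mono (D.arc_subset_K he)

/-- number of components -/
noncomputable def nc (E : Finset (Sym2 V)) : ℕ :=
  Nat.card (SimpleGraph.fromEdgeSet (E : Set (Sym2 V))).ConnectedComponent

lemma fromEdgeSet_le {E E' : Finset (Sym2 V)} (h : E ⊆ E') :
    SimpleGraph.fromEdgeSet (E : Set (Sym2 V)) ≤ SimpleGraph.fromEdgeSet (E' : Set (Sym2 V)) :=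
  SimpleGraph.fromEdgeSet_mono (by exact_mod_cast h)

lemma map_surj {E E' : Finset (Sym2 V)} (h : E ⊆ E') : Function.Surjective
    (SimpleGraph.ConnectedComponent.map (SimpleGraph.Hom.ofLE (fromEdgeSet_le h))) := by
  intro c
  induction c using SimpleGraph.ConnectedComponent.ind with
  | h v => exact ⟨SimpleGraph.connectedComponentMk _ v, rfl⟩

lemma nc_mono [Finite V] {E E' : Finset (Sym2 V)} (h : E ⊆ E') :
    nc E' ≤ nc E :=
  Nat.card_le_card_of_surjective _ (map_surj h)

lemma nc_lt [Finite V] [DecidableEq V] {E : Finset (Sym2 V)} {u v : V} (huv : u ≠ v)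
    (hr : ¬ (SimpleGraph.fromEdgeSet (E : Set (Sym2 V))).Reachable u v) :
    nc (insert s(u, v) E) + 1 ≤ nc E := by
  have hsub : E ⊆ insert s(u, v) E := Finset.subset_insert _ _
  have hle := nc_mono hsub
  rcases hle.lt_or_eq with h | h
  · exact h
  · exfalso
    have hinj : Function.Injective
        (SimpleGraph.ConnectedComponent.map (SimpleGraph.Hom.ofLE (fromEdgeSet_le hsub))) := by
      exact ((Nat.bijective_iff_surjective_and_card _).mpr ⟨map_surj hsub, h.symm⟩).1
    apply hr
    have h1 := @hinj (SimpleGraph.connectedComponentMk _ u) (SimpleGraph.connectedComponentMk _ v) (by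
      simp only [SimpleGraph.ConnectedComponent.map_mk]
      apply SimpleGraph.ConnectedComponent.sound
      apply SimpleGraph.Adj.reachable
      rw [SimpleGraph.fromEdgeSet_adj]
      exact ⟨by simp, huv⟩)
    exact SimpleGraph.ConnectedComponent.exact h1

/-- lower bound on the number of faces -/
lemma faces_lower [Fintype V] (E : Finset (Sym2 V)) : (∀ e ∈ E, e ∈ G.edgeSet) →
    ∃ Q : Finset ℂ, (∀ p ∈ Q, p ∉ D.K E) ∧ (∀ p ∈ Q, ∀ q ∈ Q, p ≠ q → ¬ Conn (D.K E) p q) ∧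
      E.card + 1 + nc E ≤ Q.card + Fintype.card V := by
  classical
  induction E using Finset.induction_on with
  | empty =>
    intro _
    obtain ⟨p, hp⟩ : ∃ p, p ∉ D.K ∅ := by
      by_contra! h
      have := D.K_compact (E := ∅) (by simp)
      rw [eq_univ_of_forall h] at this
      exact noncompact_univ ℂ this
    refine ⟨{p}, by simpa using hp, by simp, ?_⟩
    have : nc (∅ : Finset (Sym2 V)) ≤ Fintype.card V := by
      rw [← Nat.card_eq_fintype_card]
      exact Nat.card_le_card_of_surjective (SimpleGraph.connectedComponentMk _) (by
        intro c
        induction c using SimpleGraph.ConnectedComponent.ind with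
        | h v => exact ⟨v, rfl⟩)
    simp only [Finset.card_empty, Finset.card_singleton]
    omega
  | insert e E heE ih =>
    intro hE'
    have hE : ∀ e ∈ E, e ∈ G.edgeSet := fun f hf => hE' f (Finset.mem_insert_of_mem hf)
    obtain ⟨Q, hQ1, hQ2, hQ3⟩ := ih hE
    induction e with
    | h u v =>
    have huv : G.Adj u v := hE' _ (Finset.mem_insert_self _ _)
    have hA := D.arc_isArc u v huv
    have hKA := D.K_arc hE huv heE
    obtain ⟨c, hc⟩ := hA.open_connected.nonempty
    have hcl := (D.K_compact hE).isClosed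
    have hopen : ∀ q ∈ D.arc s(u, v), q ∉ D.K E → Conn (D.K E) c q := by
      intro q hq hqK
      refine conn_of_preconnected hA.open_connected.isPreconnected ?_ hc ⟨hq, ?_⟩
      · intro w hw hwK
        exact hw.2 (hKA w hwK hw.1)
      · rintro (rfl | rfl)
        · exact hqK (D.vertex_mem_K E _)
        · exact hqK (D.vertex_mem_K E _)
    have hfil : (Q.filter (fun q => Conn (D.K E) c q)).card ≤ 1 := by
      rw [Finset.card_le_one]
      intro x hx y hy
      rw [Finset.mem_filter] at hx hy
      by_contra hxy
      exact hQ2 x hx.1 y hy.1 hxy (hx.2.symm.trans hy.2)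
    have hsum := Finset.card_filter_add_card_filter_not (s := Q) (fun q => Conn (D.K E) c q)
    have gen : ∀ N : Finset ℂ, (∀ p ∈ N, Conn (D.K E) c p ∧ p ∉ D.arc s(u, v)) →
        (∀ p ∈ N, ∀ q ∈ N, p ≠ q → ¬ Conn (D.K E ∪ D.arc s(u, v)) p q) →
        ∃ Q' : Finset ℂ, (∀ p ∈ Q', p ∉ D.K (insert s(u, v) E)) ∧
          (∀ p ∈ Q', ∀ q ∈ Q', p ≠ q → ¬ Conn (D.K (insert s(u, v) E)) p q) ∧
          Q.card + N.card ≤ Q'.card + 1 := by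
      intro N hN1 hN2
      rw [D.K_insert]
      refine ⟨Q.filter (fun q => ¬ Conn (D.K E) c q) ∪ N, ?_, ?_, ?_⟩
      · intro p hp
        rw [Finset.mem_union, Finset.mem_filter] at hp
        rcases hp with ⟨hp, hpc⟩ | hp
        · rintro (h | h)
          · exact hQ1 p hp h
          · exact hpc (hopen p h (hQ1 p hp))
        · rintro (h | h)
          · exact (hN1 p hp).1.right_not_mem h
          · exact (hN1 p hp).2 h
      · intro p hp q hq hpq hcon
        rw [Finset.mem_union, Finset.mem_filter] at hp hq
        have hcon' : Conn (D.K E) p q := hcon.mono subset_union_left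
        rcases hp with ⟨hp, hpc⟩ | hp <;> rcases hq with ⟨hq, hqc⟩ | hq
        · exact hQ2 p hp q hq hpq hcon'
        · exact hpc ((hN1 q hq).1.trans hcon'.symm)
        · exact hqc ((hN1 p hp).1.trans hcon')
        · exact hN2 p hp q hq hpq hcon
      · rw [Finset.card_union_of_disjoint]
        · omega
        · rw [Finset.disjoint_left]
          intro x hx hx'
          exact (Finset.mem_filter.mp hx).2 (hN1 x hx').1
    rw [Finset.card_insert_of_notMem heE]
    by_cases hr : (SimpleGraph.fromEdgeSet (E : Set (Sym2 V))).Reachable u v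
    · obtain ⟨p, q, hp, hq, hpA, hqA, hpq⟩ :=
        arc_splits hcl hA (D.joined_of_reachable hE hr) hKA hc
      have hne : p ≠ q := by
        rintro rfl
        refine hpq (Conn.refl ?_)
        rintro (h | h)
        · exact hp.right_not_mem h
        · exact hpA h
      obtain ⟨Q', h1, h2, h3⟩ := gen {p, q} (by simp [hp, hq, hpA, hqA]) (by
        intro x hx y hy hxy
        simp only [Finset.mem_insert, Finset.mem_singleton] at hx hy
        rcases hx with rfl | rfl <;> rcases hy with rfl | rfl
        · exact absurd rfl hxy
        · exact hpq
        · exact fun h => hpq h.symm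
        · exact absurd rfl hxy)
      refine ⟨Q', h1, h2, ?_⟩
      rw [Finset.card_pair hne] at h3
      have := nc_mono (Finset.subset_insert s(u, v) E)
      omega
    · obtain ⟨p, hp, hpA⟩ := exists_off_arc hcl hA hKA hc
      obtain ⟨Q', h1, h2, h3⟩ := gen {p} (by simp [hp, hpA]) (by simp)
      refine ⟨Q', h1, h2, ?_⟩
      rw [Finset.card_singleton] at h3
      have := nc_lt huv.ne hr
      omega

/-- a set that does not separate the plane -/
def NS (X : Set ℂ) : Prop := ∀ p q, p ∉ X → q ∉ X → Conn X p q

lemma ns_countable {X : Set ℂ} (hX : X.Countable) : NS X := by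
  intro p q hp hq
  have : IsPreconnected Xᶜ := by
    refine (hX.isPathConnected_compl_of_one_lt_rank ?_).isConnected.isPreconnected
    rw [Complex.rank_real_complex]
    norm_num
  exact conn_of_preconnected this (fun z hz => hz) hp hq

lemma ns_add {X A : Set ℂ} (hX : IsCompact X) (h : NS X) {a b : ℂ} (hA : CArc A a b)
    (hXA : ∀ z ∈ X, z ∈ A → z = a) : NS (X ∪ A) := by
  intro p q hp hq
  simp only [mem_union, not_or] at hp hq
  exact conn_pendant hX hA hXA (h p q hp.1 hq.1) hp.2 hq.2

lemma ns_two [Finite V] {E : Finset (Sym2 V)} (hE : ∀ e ∈ E, e ∈ G.edgeSet) (hc : E.card ≤ 2) :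
    NS (D.K E) := by
  classical
  have one : ∀ (X : Set V) (u v : V), G.Adj u v → v ∉ X → NS (D.ρ '' X ∪ D.arc s(u, v)) := by
    intro X u v huv hv
    refine ns_add (X.toFinite.image _).isCompact (ns_countable (X.toFinite.image _).countable)
      (D.arc_isArc u v huv) ?_
    rintro _ ⟨w, hw, rfl⟩ h
    rcases Sym2.mem_iff.mp (D.vertex_mem _ huv w h) with rfl | rfl
    · rfl
    · exact absurd hw hv
  have hcases : E.card = 0 ∨ E.card = 1 ∨ E.card = 2 := by omega
  rcases hcases with h | h | h
  · rw [Finset.card_eq_zero] at h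
    subst h
    have : D.K ∅ = range D.ρ := by simp [K]
    rw [this]
    exact ns_countable (finite_range _).countable
  · obtain ⟨e, rfl⟩ := Finset.card_eq_one.mp h
    induction e with
    | h u v =>
    have huv : G.Adj u v := hE s(u, v) (by simp)
    have := one {v}ᶜ u v huv (by simp)
    convert this using 1
    ext z
    simp only [mem_K, mem_union, mem_image, Finset.mem_singleton, exists_eq_left]
    constructor
    · rintro (⟨w, rfl⟩ | h)
      · by_cases hw : w = v
        · subst hw; exact Or.inr (D.arc_isArc _ _ huv).right_mem
        · exact Or.inl ⟨w, hw, rfl⟩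
      · exact Or.inr h
    · rintro (⟨w, -, rfl⟩ | h)
      · exact Or.inl ⟨w, rfl⟩
      · exact Or.inr h
  · obtain ⟨e, f, hef, rfl⟩ := Finset.card_eq_two.mp h
    have hf' : f ∈ G.edgeSet := hE _ (by simp)
    obtain ⟨x, y, rfl, hy⟩ : ∃ x y, f = s(x, y) ∧ y ∉ e := by
      induction f with
      | h x y =>
      by_cases hy : y ∈ e
      · refine ⟨y, x, Sym2.eq_swap, fun hx => hef ?_⟩
        have : x ≠ y := SimpleGraph.Adj.ne hf'
        exact (Sym2.mem_and_mem_iff this).mp ⟨hx, hy⟩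
      · exact ⟨x, y, rfl, hy⟩
    have hxy : G.Adj x y := hf'
    induction e with
    | h u v =>
    have huv : G.Adj u v := hE s(u, v) (by simp)
    have h1 := one {v, y}ᶜ u v huv (by simp)
    have h2 := ns_add ((((toFinite ({v, y}ᶜ : Set V)).image _).isCompact).union
      (D.arc_isArc u v huv).isCompact) h1 (D.arc_isArc x y hxy) (by
        rintro z hz hzA
        have : z = D.ρ x ∨ z = D.ρ y := by
          rcases hz with ⟨w, hw, rfl⟩ | hz
          · rcases Sym2.mem_iff.mp (D.vertex_mem _ hxy w hzA) with rfl | rfl <;> simp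
          · obtain ⟨w, hw1, hw2, rfl⟩ := D.arcs_cross _ huv _ hxy hef z ⟨hz, hzA⟩
            rcases Sym2.mem_iff.mp hw2 with rfl | rfl <;> simp
        rcases this with h | h
        · exact h
        · exfalso
          subst h
          rcases hz with ⟨w, hw, hw2⟩ | hz
          · rw [D.inj hw2] at hw
            simp at hw
          · exact hy (D.vertex_mem _ huv y hz))
    convert h2 using 1
    ext z
    simp only [mem_K, mem_union, mem_image, Finset.mem_singleton, Finset.mem_insert,
      exists_eq_or_imp, exists_eq_left]
    constructor
    · rintro (⟨w, rfl⟩ | h | h)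
      · by_cases hw : w = v
        · subst hw; exact Or.inl (Or.inr (D.arc_isArc _ _ huv).right_mem)
        · by_cases hw' : w = y
          · subst hw'; exact Or.inr (D.arc_isArc _ _ hxy).right_mem
          · exact Or.inl (Or.inl ⟨w, by simp [hw, hw'], rfl⟩)
      · exact Or.inl (Or.inr h)
      · exact Or.inr h
    · rintro ((⟨w, -, rfl⟩ | h) | h)
      · exact Or.inl ⟨w, rfl⟩
      · exact Or.inr (Or.inl h)
      · exact Or.inr (Or.inr h)

/-- upper bound on the number of faces -/
lemma faces_upper [Finite V] {E : Finset (Sym2 V)} (hE : ∀ e ∈ E, e ∈ G.edgeSet)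
    (hc : 3 ≤ E.card) (Q : Finset ℂ) (hQ1 : ∀ p ∈ Q, p ∉ D.K E)
    (hQ2 : ∀ p ∈ Q, ∀ q ∈ Q, p ≠ q → ¬ Conn (D.K E) p q) : Q.card * 3 ≤ E.card * 2 := by
  classical
  have hErase : ∀ i, ∀ e ∈ E.erase i, e ∈ G.edgeSet := fun i e he => hE e (Finset.mem_of_mem_erase he)
  -- a point on each open arc
  have hpt : ∀ i : Sym2 V, ∃ c : ℂ, i ∈ E → c ∈ D.arc i ∧ (∀ v, c ≠ D.ρ v) ∧
      ∀ z ∈ D.arc i, (∀ v, z ≠ D.ρ v) → Conn (D.K (E.erase i)) c z := by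
    intro i
    by_cases hi : i ∈ E
    · induction i with
      | h u v =>
      have huv : G.Adj u v := hE _ hi
      have hA := D.arc_isArc u v huv
      have hKA := D.K_arc (hErase s(u, v)) huv (by simp)
      obtain ⟨c, hc⟩ := hA.open_connected.nonempty
      refine ⟨c, fun _ => ⟨hc.1, ?_, ?_⟩⟩
      · rintro w rfl
        exact hc.2 (hKA _ (D.vertex_mem_K _ w) hc.1)
      · intro z hz hzv
        refine conn_of_preconnected hA.open_connected.isPreconnected ?_ hc ⟨hz, ?_⟩
        · intro w hw hwK
          exact hw.2 (hKA w hwK hw.1)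
        · rintro (h | h)
          · exact hzv u h
          · exact hzv v h
    · exact ⟨0, fun h => absurd h hi⟩
  choose c hcs using hpt
  have hEi : ∀ i ∈ E, D.K E = D.K (E.erase i) ∪ D.arc i := by
    intro i hi
    rw [← D.K_insert, Finset.insert_erase hi]
  refine Finset.card_mul_le_card_mul (fun q i => Conn (D.K (E.erase i)) (c i) q) ?_ ?_
  · intro q hq
    by_contra hlt
    set Eq := E.bipartiteAbove (fun q i => Conn (D.K (E.erase i)) (c i) q) q with hEq
    have hEqE : Eq ⊆ E := Finset.filter_subset _ _
    have hNS : NS (D.K Eq) := D.ns_two (fun e he => hE e (hEqE he)) (by omega)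
    obtain ⟨k, hk, hkq⟩ : ∃ k ∈ E, k ∉ Eq := by
      by_contra! h
      have := Finset.card_le_card (show E ⊆ Eq from h)
      omega
    have hck := hcs k hk
    have hckq : c k ∉ D.K Eq := by
      rw [D.mem_K]
      rintro (⟨v, hv⟩ | ⟨e, he, hce⟩)
      · exact hck.2.1 v hv.symm
      · obtain ⟨w, -, -, hw⟩ := D.arcs_cross e (hE e (hEqE he)) k (hE k hk)
          (fun h => hkq (h ▸ he)) (c k) ⟨hce, hck.1⟩
        exact hck.2.1 w hw
    have hqq : q ∉ D.K Eq := fun h => hQ1 q hq (D.K_mono hEqE h)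
    have hpre : IsPreconnected (D.K Eq)ᶜ := by
      have : (D.K Eq)ᶜ = connectedComponentIn (D.K Eq)ᶜ q := by
        apply Subset.antisymm
        · intro z hz
          exact hNS q z hqq hz
        · exact connectedComponentIn_subset _ _
      rw [this]
      exact isPreconnected_connectedComponentIn
    have hcl := (D.K_compact hE).isClosed
    have hsub : (D.K Eq)ᶜ ⊆ connectedComponentIn (D.K E)ᶜ q := by
      refine hpre.subset_of_closure_inter_subset hcl.isOpen_compl.connectedComponentIn
        ⟨q, hqq, mem_connectedComponentIn (hQ1 q hq)⟩ ?_
      rintro z ⟨hz1, hz2⟩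
      refine comp_closure hcl hz1 ?_
      intro hzK
      rcases D.mem_K.mp hzK with ⟨v, rfl⟩ | ⟨i, hi, hzi⟩
      · exact hz2 (D.vertex_mem_K _ v)
      · have hzv : ∀ v, z ≠ D.ρ v := by
          rintro v rfl
          exact hz2 (D.vertex_mem_K _ v)
        have h1 := (hcs i hi).2.2 z hzi hzv
        have ho : IsOpen (connectedComponentIn (D.K (E.erase i))ᶜ (c i)) :=
          (D.K_compact (hErase i)).isClosed.isOpen_compl.connectedComponentIn
        obtain ⟨w, hw1, hw2⟩ := mem_closure_iff.mp hz1 _ ho h1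
        have hw2' : Conn (D.K (E.erase i)) q w :=
          Conn.mono (D.K_mono (Finset.erase_subset _ _)) hw2
        have hiq : i ∈ Eq := by
          rw [hEq, Finset.mem_bipartiteAbove]
          exact ⟨hi, Conn.trans (q := w) hw1 hw2'.symm⟩
        exact hz2 (D.arc_subset_K hiq hzi)
    have := connectedComponentIn_subset _ _ (hsub hckq)
    exact this (D.arc_subset_K hk hck.1)
  · intro i hi
    by_contra hlt
    have h3 : 2 < (Q.bipartiteBelow (fun q i => Conn (D.K (E.erase i)) (c i) q) i).card := by omega
    obtain ⟨p, q, r, hp, hq, hr, hpq, hpr, hqr⟩ := Finset.two_lt_card_iff.mp h3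
    rw [Finset.mem_bipartiteBelow] at hp hq hr
    have hA : ∀ p ∈ Q, p ∉ D.arc i := fun p hp h => hQ1 p hp (D.arc_subset_K hi h)
    induction i with
    | h u v =>
    have huv : G.Adj u v := hE _ hi
    have := three_points (D.K_compact (hErase s(u, v))) (D.arc_isArc u v huv)
      (D.vertex_mem_K _ u) (D.vertex_mem_K _ v) (D.K_arc (hErase s(u, v)) huv (by simp))
      (hp.2.symm.trans hq.2) (hq.2.symm.trans hr.2) (hA p hp.1) (hA q hq.1) (hA r hr.1)
    rw [← hEi _ hi] at this
    rcases this with h | h | h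
    · exact hQ2 p hp.1 q hq.1 hpq h
    · exact hQ2 p hp.1 r hr.1 hpr h
    · exact hQ2 q hq.1 r hr.1 hqr h

/-- Euler bound -/
theorem edge_bound [Fintype V] (D : CDrawing G) (hV : 3 ≤ Fintype.card V) (E : Finset (Sym2 V))
    (hE : ∀ e ∈ E, e ∈ G.edgeSet) : E.card + 6 ≤ 3 * Fintype.card V := by
  by_cases hc : 3 ≤ E.card
  · obtain ⟨Q, h1, h2, h3⟩ := D.faces_lower E hE
    have h4 := D.faces_upper hE hc Q h1 h2
    have h5 : 0 < nc E := by
      have : Nonempty V := Fintype.card_pos_iff.mp (by omega)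
      have : Nonempty (SimpleGraph.fromEdgeSet (E : Set (Sym2 V))).ConnectedComponent :=
        ⟨SimpleGraph.connectedComponentMk _ (Classical.arbitrary V)⟩
      exact Nat.card_pos
    omega
  · omega

end CDrawing

/-- Restriction of a drawing along an injection. -/
def CDrawing.comap {V W : Type} {G : SimpleGraph V} (D : CDrawing G) (f : W ↪ V) :
    CDrawing (G.comap f) where
  ρ := fun w => D.ρ (f w)
  inj := fun _ _ h => f.injective (D.inj h)
  arc := fun e => D.arc (e.map f)
  arc_isArc := fun u v h => D.arc_isArc (f u) (f v) h
  vertex_mem := by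
    intro e he w hw
    induction e with
    | h u v =>
    have h1 := D.vertex_mem s(f u, f v) he (f w) hw
    rcases Sym2.mem_iff.mp h1 with h | h
    · rw [f.injective h]; simp
    · rw [f.injective h]; simp
  arcs_cross := by
    intro e he e' he' hne x hx
    induction e with
    | h u v =>
    induction e' with
    | h u' v' =>
    obtain ⟨w, hw1, hw2, rfl⟩ := D.arcs_cross s(f u, f v) he s(f u', f v') he' (by
      intro h
      exact hne (Sym2.map.injective f.injective h)) x hx
    rcases Sym2.mem_iff.mp hw1 with rfl | rfl
    · refine ⟨u, by simp, ?_, rfl⟩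
      rcases Sym2.mem_iff.mp hw2 with h | h
      · rw [f.injective h]; simp
      · rw [f.injective h]; simp
    · refine ⟨v, by simp, ?_, rfl⟩
      rcases Sym2.mem_iff.mp hw2 with h | h
      · rw [f.injective h]; simp
      · rw [f.injective h]; simp

/-- Transfer of a drawing from `ℝ × ℝ` to `ℂ`. -/
noncomputable def PlanarDrawing.toC {V : Type} [Fintype V] {G : SimpleGraph V}
    (D : PlanarDrawing G) : CDrawing G where
  ρ := fun v => Complex.equivRealProdCLM.symm (D.ρ v)
  inj := fun _ _ h => D.inj (Complex.equivRealProdCLM.symm.injective h)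
  arc := fun e => Complex.equivRealProdCLM.symm '' D.arc e
  arc_isArc := by
    intro u v h
    obtain ⟨f, h1, h2, h3, h4, h5⟩ := D.arc_isArc u v h
    refine ⟨fun t => Complex.equivRealProdCLM.symm (f t), ?_, ?_, ?_, ?_, ?_⟩
    · exact Complex.equivRealProdCLM.symm.continuous.comp_continuousOn h1
    · intro s hs t ht hst
      exact h2 hs ht (Complex.equivRealProdCLM.symm.injective hst)
    · simp only [h3]
    · simp only [h4]
    · rw [h5, image_image]
  vertex_mem := by
    rintro e he w ⟨x, hx, hxw⟩
    rw [Complex.equivRealProdCLM.symm.injective hxw] at hx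
    exact D.vertex_mem e he w hx
  arcs_cross := by
    rintro e he e' he' hne _ ⟨⟨x, hx, rfl⟩, ⟨y, hy, hxy⟩⟩
    rw [Complex.equivRealProdCLM.symm.injective hxy] at hy
    obtain ⟨w, h1, h2, rfl⟩ := D.arcs_cross e he e' he' hne x ⟨hx, hy⟩
    exact ⟨w, h1, h2, rfl⟩

open Classical in
/-- degree of `v` into the set `S` -/
noncomputable def dg {V : Type} (G : SimpleGraph V) (S : Finset V) (v : V) : ℕ :=
  (S.filter (fun w => G.Adj v w)).card

/-- twice the number of edges inside `S` -/
noncomputable def dsum {V : Type} (G : SimpleGraph V) (S : Finset V) : ℕ := ∑ v ∈ S, dg G S v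

/-- hereditary Euler bound -/
def HB {V : Type} (G : SimpleGraph V) : Prop :=
  ∀ S : Finset V, 3 ≤ S.card → dsum G S + 12 ≤ 6 * S.card

lemma CDrawing.hb {V : Type} {G : SimpleGraph V} (D : CDrawing G) : HB G := by
  classical
  intro S hS
  let H : SimpleGraph S := G.comap (Function.Embedding.subtype (· ∈ S))
  let D' : CDrawing H := D.comap _
  have h1 := D'.edge_bound (by simpa using hS) H.edgeFinset (by simp)
  have h2 := H.sum_degrees_eq_twice_card_edges
  have h3 : dsum G S = ∑ v : S, H.degree v := by
    rw [dsum, ← Finset.sum_coe_sort]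
    refine Finset.sum_congr rfl ?_
    intro v _
    rw [dg, ← SimpleGraph.card_neighborFinset_eq_degree]
    symm
    refine Finset.card_bij (fun w _ => (w : V)) ?_ ?_ ?_
    · intro w hw
      rw [SimpleGraph.mem_neighborFinset] at hw
      rw [Finset.mem_filter]
      exact ⟨w.2, hw⟩
    · intro x _ y _ h
      exact Subtype.ext h
    · intro w hw
      rw [Finset.mem_filter] at hw
      refine ⟨⟨w, hw.1⟩, ?_, rfl⟩
      rw [SimpleGraph.mem_neighborFinset]
      exact hw.2
  rw [Fintype.card_coe] at h1
  omega

section Comb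

variable {V : Type} {G : SimpleGraph V}

lemma dg_mono {S T : Finset V} (h : S ⊆ T) (v : V) : dg G S v ≤ dg G T v := by
  classical
  exact Finset.card_le_card (Finset.filter_subset_filter _ h)

lemma dg_erase [DecidableEq V] {S : Finset V} {v : V} (hv : v ∈ S) (w : V) [Decidable (G.Adj w v)] :
    dg G S w = dg G (S.erase v) w + if G.Adj w v then 1 else 0 := by
  classical
  have : S = insert v (S.erase v) := (Finset.insert_erase hv).symm
  unfold dg
  conv_lhs => rw [this]
  rw [Finset.filter_insert]
  split_ifs with h
  · rw [Finset.card_insert_of_notMem (by simp)]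
  · rfl

lemma dg_erase_self [DecidableEq V] {S : Finset V} {v : V} (hv : v ∈ S) :
    dg G S v = dg G (S.erase v) v := by
  classical
  rw [dg_erase hv]; simp

lemma dsum_erase [DecidableEq V] {S : Finset V} {v : V} (hv : v ∈ S) :
    dsum G S = dsum G (S.erase v) + 2 * dg G S v := by
  classical
  unfold dsum
  rw [← Finset.add_sum_erase S _ hv]
  have : ∑ w ∈ S.erase v, dg G S w =
      ∑ w ∈ S.erase v, (dg G (S.erase v) w + if G.Adj w v then 1 else 0) :=
    Finset.sum_congr rfl (fun w _ => dg_erase hv w)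
  rw [this, Finset.sum_add_distrib, ← Finset.card_filter]
  have h2 : ((S.erase v).filter (fun w => G.Adj w v)).card = dg G S v := by
    rw [dg_erase_self hv, dg]
    congr 1
    apply Finset.filter_congr
    intro w _
    exact G.adj_comm w v
  rw [h2]; omega

lemma dg_le [DecidableEq V] {S : Finset V} {v : V} (hv : v ∈ S) : dg G S v + 1 ≤ S.card := by
  classical
  rw [dg_erase_self hv]
  have h1 : dg G (S.erase v) v ≤ (S.erase v).card := Finset.card_filter_le _ _
  have h2 := Finset.card_erase_add_one hv
  omega

lemma exists_dg_le (hG : HB G) {S : Finset V} (hS : 3 ≤ S.card) (k : ℕ)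
    (hk : 6 * S.card < 12 + (k + 1) * S.card) : ∃ v ∈ S, dg G S v ≤ k := by
  by_contra! h
  have h1 := hG S hS
  have h2 : S.card • (k + 1) ≤ dsum G S := Finset.card_nsmul_le_sum _ _ _ (fun v hv => h v hv)
  rw [smul_eq_mul] at h2
  nlinarith

lemma exists_dg_le_five (hG : HB G) {S : Finset V} (hS : S.Nonempty) : ∃ v ∈ S, dg G S v ≤ 5 := by
  classical
  by_cases h3 : 3 ≤ S.card
  · exact exists_dg_le hG h3 5 (by omega)
  · obtain ⟨v, hv⟩ := hS
    have := dg_le (G := G) hv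
    exact ⟨v, hv, by omega⟩

lemma exists_dg_le_four (hG : HB G) {S : Finset V} (hS : S.Nonempty) (hc : S.card ≤ 11) :
    ∃ v ∈ S, dg G S v ≤ 4 := by
  classical
  by_cases h3 : 3 ≤ S.card
  · exact exists_dg_le hG h3 4 (by omega)
  · obtain ⟨v, hv⟩ := hS
    have := dg_le (G := G) hv
    exact ⟨v, hv, by omega⟩

/-- conflict free embeddings -/
def Emb {V W : Type} (G : SimpleGraph V) (H : SimpleGraph W) : Prop :=
  ∃ f : W ↪ V, ∀ a b : W, H.Adj a b → ¬ G.Adj (f a) (f b)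

variable {W : Type} {H : SimpleGraph W}

lemma greedy [Nonempty V] (b D : ℕ) (S : Finset V) (hD : ∀ v ∈ S, dg G S v ≤ D) (T : Finset W)
    (hdeg : ∀ T' ⊆ T, T'.Nonempty → ∃ u ∈ T', dg H T' u ≤ b) (hc : T.card + b * D ≤ S.card) :
    ∃ f : W → V, InjOn f T ∧ (∀ a ∈ T, f a ∈ S) ∧
      ∀ a ∈ T, ∀ b ∈ T, H.Adj a b → ¬ G.Adj (f a) (f b) := by
  classical
  induction hn : T.card generalizing T with
  | zero =>
    rw [Finset.card_eq_zero] at hn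
    subst hn
    exact ⟨fun _ => Classical.arbitrary V, by simp, by simp, by simp⟩
  | succ n ih =>
    obtain ⟨u, hu, hub⟩ := hdeg T subset_rfl (Finset.card_pos.mp (by omega))
    have hce := Finset.card_erase_add_one hu
    obtain ⟨f, hf1, hf2, hf3⟩ := ih (T.erase u)
      (fun T' hT' => hdeg T' (hT'.trans (Finset.erase_subset _ _))) (by omega) (by omega)
    set N := (T.erase u).filter (fun w => H.Adj u w) with hN
    have hNc : N.card ≤ b := by
      have := dg_erase_self (G := H) hu
      rw [this] at hub
      exact hub
    set B := N.biUnion (fun w => S.filter (fun x => G.Adj (f w) x)) with hB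
    have hBc : B.card ≤ b * D := by
      refine le_trans (Finset.card_biUnion_le_card_mul _ _ D ?_) (Nat.mul_le_mul_right D hNc)
      intro w hw
      exact hD (f w) (hf2 w (Finset.mem_filter.mp hw).1)
    obtain ⟨x, hxS, hx⟩ : ∃ x ∈ S, x ∉ (T.erase u).image f ∪ B := by
      by_contra! h
      have h1 := Finset.card_le_card (show S ⊆ _ from h)
      have h2 := Finset.card_union_le ((T.erase u).image f) B
      have h3 := Finset.card_image_le (s := T.erase u) (f := f)
      omega
    rw [Finset.mem_union, not_or] at hx
    have hxa : ∀ w ∈ T, w ≠ u → H.Adj u w → ¬ G.Adj (f w) x := by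
      intro w hw hwu hadj hG
      apply hx.2
      rw [hB, Finset.mem_biUnion]
      exact ⟨w, Finset.mem_filter.mpr ⟨Finset.mem_erase.mpr ⟨hwu, hw⟩, hadj⟩,
        Finset.mem_filter.mpr ⟨hxS, hG⟩⟩
    have hxi : ∀ w ∈ T, w ≠ u → f w ≠ x := by
      intro w hw hwu h
      exact hx.1 (Finset.mem_image.mpr ⟨w, Finset.mem_erase.mpr ⟨hwu, hw⟩, h⟩)
    refine ⟨Function.update f u x, ?_, ?_, ?_⟩
    · intro a ha c hc hac
      by_cases hau : a = u <;> by_cases hcu : c = u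
      · rw [hau, hcu]
      · subst hau
        rw [Function.update_self, Function.update_of_ne hcu] at hac
        exact absurd hac.symm (hxi c hc hcu)
      · subst hcu
        rw [Function.update_self, Function.update_of_ne hau] at hac
        exact absurd hac (hxi a ha hau)
      · rw [Function.update_of_ne hcu, Function.update_of_ne hau] at hac
        exact hf1 (by simpa using ⟨ha, hau⟩) (by simpa using ⟨hc, hcu⟩) hac
    · intro a ha
      by_cases hau : a = u
      · subst hau; rwa [Function.update_self]
      · rw [Function.update_of_ne hau]
        exact hf2 a (Finset.mem_erase.mpr ⟨hau, ha⟩)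
    · intro a ha c hc hac
      by_cases hau : a = u <;> by_cases hcu : c = u
      · subst hau; subst hcu; exact absurd hac (H.loopless.irrefl _)
      · subst hau
        rw [Function.update_self, Function.update_of_ne hcu]
        exact fun h => hxa c hc hcu hac h.symm
      · subst hcu
        rw [Function.update_self, Function.update_of_ne hau]
        exact hxa a ha hau hac.symm
      · rw [Function.update_of_ne hcu, Function.update_of_ne hau]
        exact hf3 a (Finset.mem_erase.mpr ⟨hau, ha⟩) c (Finset.mem_erase.mpr ⟨hcu, hc⟩) hac

/-- lower bound function for the number of edges -/
def LB (b N : ℕ) : ℕ := ∑ j ∈ Finset.range N, (j / b + 1)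

lemma greedy_count [Nonempty V] [Fintype W] (b : ℕ)
    (hdeg : ∀ T : Finset W, T.Nonempty → ∃ u ∈ T, dg H T u ≤ b) (hno : ¬ Emb G H) (N : ℕ) :
    ∀ S : Finset V, S.card + 1 = Fintype.card W + N → 2 * LB b N ≤ dsum G S := by
  classical
  induction N with
  | zero => intro S _; simp [LB]
  | succ N ih =>
    intro S hS
    have hS' : S.card = Fintype.card W + N := by omega
    obtain ⟨v, hv, hvd⟩ : ∃ v ∈ S, N / b + 1 ≤ dg G S v := by
      by_contra! h
      obtain ⟨f, h1, -, h3⟩ := greedy (G := G) (H := H) b (N / b) S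
        (fun v hv => by have := h v hv; omega)
        Finset.univ (fun T' _ => hdeg T') (by
          rw [Finset.card_univ, hS']
          have := Nat.mul_div_le N b
          omega)
      refine hno ⟨⟨f, fun x y hxy => h1 (by simp) (by simp) hxy⟩, ?_⟩
      intro x y hxy
      exact h3 x (by simp) y (by simp) hxy
    have h2 := Finset.card_erase_add_one hv
    have h1 := ih (S.erase v) (by omega)
    have h3 := dsum_erase (G := G) hv
    have h4 : LB b (N + 1) = LB b N + (N / b + 1) := by
      unfold LB; rw [Finset.sum_range_succ]
    omega

lemma LB_five (N : ℕ) : N * (N + 1) ≤ 10 * LB 5 N := by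
  induction N with
  | zero => simp
  | succ N ih =>
    have h4 : LB 5 (N + 1) = LB 5 N + (N / 5 + 1) := by
      unfold LB; rw [Finset.sum_range_succ]
    rw [h4]
    have : N + 1 ≤ 5 * (N / 5 + 1) := by omega
    nlinarith

lemma emb_large [Fintype V] [Fintype W] (hG : HB G) (hH : HB H) (h8 : 8 ≤ Fintype.card W)
    (hc : 4 * Fintype.card W ≤ Fintype.card V) : Emb G H := by
  classical
  by_contra hno
  have : Nonempty V := Fintype.card_pos_iff.mp (by omega)
  obtain ⟨S, -, hS⟩ := Finset.exists_subset_card_eq (s := (Finset.univ : Finset V))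
    (n := 4 * Fintype.card W) (by simpa using hc)
  have hb := hG S (by omega)
  set m := Fintype.card W with hm
  by_cases h12 : 12 ≤ m
  · have h1 := greedy_count (G := G) (H := H) 5 (fun T hT => exists_dg_le_five hH hT) hno (3 * m + 1)
      S (by omega)
    have h2 := LB_five (3 * m + 1)
    nlinarith
  · have h1 := greedy_count (G := G) (H := H) 4 (fun T hT => exists_dg_le_four hH hT (by
      have := Finset.card_le_univ T
      omega)) hno (3 * m + 1) S (by omega)
    have hcs : m = 8 ∨ m = 9 ∨ m = 10 ∨ m = 11 := by omega
    have e8 : LB 4 25 = 91 := by decide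
    have e9 : LB 4 28 = 112 := by decide
    have e10 : LB 4 31 = 136 := by decide
    have e11 : 126 < LB 4 34 := by decide
    rcases hcs with h | h | h | h <;> rw [h] at h1 hS <;> norm_num at h1 hS <;> omega

/-- independent set -/
def Ind (G : SimpleGraph V) (I : Finset V) : Prop := ∀ x ∈ I, ∀ y ∈ I, ¬ G.Adj x y

lemma exists_inj [Nonempty V] (A : Finset W) (B : Finset V) (h : A.card ≤ B.card) :
    ∃ f : W → V, InjOn f A ∧ ∀ a ∈ A, f a ∈ B := by
  classical
  obtain ⟨e⟩ := Function.Embedding.nonempty_of_card_le (α := A) (β := B) (by simpa using h)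
  refine ⟨fun w => if hw : w ∈ A then e ⟨w, hw⟩ else Classical.arbitrary V, ?_, ?_⟩
  · intro x hx y hy hxy
    have hx' : x ∈ A := hx
    have hy' : y ∈ A := hy
    simp only [hx', hy', dif_pos] at hxy
    have := e.injective (Subtype.ext hxy)
    exact congrArg Subtype.val this
  · intro a ha
    simp only [ha, dif_pos]
    exact (e ⟨a, ha⟩).2

lemma emb_ind [Nonempty V] [Fintype W] {I : Finset V} (hI : Ind G I) (hc : Fintype.card W ≤ I.card) : Emb G H := by
  obtain ⟨f, h1, h2⟩ := exists_inj (W := W) Finset.univ I (by simpa using hc)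
  refine ⟨⟨f, fun x y hxy => h1 (by simp) (by simp) hxy⟩, fun a b _ => ?_⟩
  exact hI _ (h2 a (by simp)) _ (h2 b (by simp))

lemma emb_pack [Nonempty V] [Fintype W] {I : Finset V} (hI : Ind G I) {x : V} (hx : x ∉ I)
    (hc : Fintype.card W = I.card + 1) {u : W}
    (hd : dg H Finset.univ u + dg G I x + 1 ≤ Fintype.card W) : Emb G H := by
  classical
  set N := Finset.univ.filter (fun w => H.Adj u w) with hN
  have hNc : N.card = dg H Finset.univ u := rfl
  set J := I.filter (fun y => ¬ G.Adj x y) with hJ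
  have hJc : J.card + dg G I x = I.card := by
    have : dg G I x + J.card = I.card := by
      unfold dg
      convert Finset.card_filter_add_card_filter_not (s := I) (fun y => G.Adj x y)
    omega
  obtain ⟨f, hf1, hf2⟩ := exists_inj (W := W) N J (by omega)
  set C := (Finset.univ.erase u).filter (fun w => ¬ H.Adj u w) with hC
  have hCc : C.card + N.card + 1 = Fintype.card W := by
    have h1 : dg H (Finset.univ.erase u) u + C.card = (Finset.univ.erase u).card := by
      unfold dg
      convert Finset.card_filter_add_card_filter_not (s := Finset.univ.erase u) (fun y => H.Adj u y)
    have h2 := Finset.card_erase_add_one (Finset.mem_univ u)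
    have h3 := dg_erase_self (G := H) (Finset.mem_univ u)
    rw [Finset.card_univ] at h2
    omega
  have hfi : (N.image f).card = N.card := Finset.card_image_of_injOn hf1
  have hfI : N.image f ⊆ I := by
    intro y hy
    obtain ⟨w, hw, rfl⟩ := Finset.mem_image.mp hy
    exact (Finset.mem_filter.mp (hf2 w hw)).1
  obtain ⟨g, hg1, hg2⟩ := exists_inj (W := W) C (I \ N.image f) (by
    rw [Finset.card_sdiff_of_subset hfI]
    omega)
  let F : W → V := fun w => if w = u then x else if H.Adj u w then f w else g w
  have F1 : F u = x := by simp [F]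
  have F2 : ∀ w, H.Adj u w → F w = f w := fun w hw => by simp [F, hw, hw.ne']
  have F3 : ∀ w, w ≠ u → ¬ H.Adj u w → F w = g w := fun w hw hw' => by simp [F, hw, hw']
  have memN : ∀ w, H.Adj u w → w ∈ N := fun w hw => by simp [hN, hw]
  have memC : ∀ w, w ≠ u → ¬ H.Adj u w → w ∈ C := fun w hw hw' => by simp [hC, hw, hw']
  have FI : ∀ w, w ≠ u → F w ∈ I := by
    intro w hw
    by_cases hadj : H.Adj u w
    · rw [F2 w hadj]; exact (Finset.mem_filter.mp (hf2 w (memN w hadj))).1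
    · rw [F3 w hw hadj]; exact (Finset.mem_sdiff.mp (hg2 w (memC w hw hadj))).1
  have Finj : Function.Injective F := by
    intro a b hab
    by_cases ha : a = u
    · by_cases hb : b = u
      · rw [ha, hb]
      · rw [ha, F1] at hab
        exact absurd (hab ▸ FI b hb) hx
    · by_cases hb : b = u
      · rw [hb, F1] at hab
        exact absurd (hab ▸ FI a ha) hx
      · by_cases ha' : H.Adj u a <;> by_cases hb' : H.Adj u b
        · rw [F2 a ha', F2 b hb'] at hab
          exact hf1 (memN a ha') (memN b hb') hab
        · rw [F2 a ha', F3 b hb hb'] at hab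
          have := (Finset.mem_sdiff.mp (hg2 b (memC b hb hb'))).2
          exact absurd (Finset.mem_image.mpr ⟨a, memN a ha', hab⟩) this
        · rw [F3 a ha ha', F2 b hb'] at hab
          have := (Finset.mem_sdiff.mp (hg2 a (memC a ha ha'))).2
          exact absurd (Finset.mem_image.mpr ⟨b, memN b hb', hab.symm⟩) this
        · rw [F3 a ha ha', F3 b hb hb'] at hab
          exact hg1 (memC a ha ha') (memC b hb hb') hab
  refine ⟨⟨F, Finj⟩, ?_⟩
  intro a b hab
  show ¬ G.Adj (F a) (F b)
  by_cases ha : a = u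
  · subst ha
    rw [F1, F2 b hab]
    exact (Finset.mem_filter.mp (hf2 b (memN b hab))).2
  · by_cases hb : b = u
    · subst hb
      rw [F1, F2 a hab.symm]
      exact fun h => (Finset.mem_filter.mp (hf2 a (memN a hab.symm))).2 h.symm
    · exact hI _ (FI a ha) _ (FI b hb)

/-- `S` contains an independent set of size `k`. -/
def IndS (G : SimpleGraph V) (S : Finset V) (k : ℕ) : Prop := ∃ I ⊆ S, Ind G I ∧ I.card = k

/-- `S` contains an independent set of size `k` and a further vertex with few neighbours in it. -/
def Good (G : SimpleGraph V) (S : Finset V) (k t : ℕ) : Prop :=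
  ∃ I ⊆ S, Ind G I ∧ I.card = k ∧ ∃ x ∈ S, x ∉ I ∧ dg G I x ≤ t

lemma ind_insert [DecidableEq V] {I : Finset V} (hI : Ind G I) {v : V} (hv : ∀ w ∈ I, ¬ G.Adj v w) :
    Ind G (insert v I) := by
  intro x hx y hy hxy
  rw [Finset.mem_insert] at hx hy
  rcases hx with rfl | hx <;> rcases hy with rfl | hy
  · exact G.loopless.irrefl _ hxy
  · exact hv y hy hxy
  · exact hv x hx hxy.symm
  · exact hI x hx y hy hxy

/-- nonneighbours -/
lemma nonnbrs [DecidableEq V] {S : Finset V} {v : V} (hv : v ∈ S) : ∃ R ⊆ S, v ∉ R ∧ (∀ w ∈ R, ¬ G.Adj v w) ∧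
    (∀ w ∈ S, w ≠ v → ¬ G.Adj v w → w ∈ R) ∧
    R.card + dg G S v + 1 = S.card := by
  classical
  refine ⟨(S.erase v).filter (fun w => ¬ G.Adj v w), ?_, by simp, by simp, by simp; tauto, ?_⟩
  · exact (Finset.filter_subset _ _).trans (Finset.erase_subset _ _)
  · have h1 := Finset.card_filter_add_card_filter_not (s := S.erase v) (fun y => G.Adj v y)
    have h2 := Finset.card_erase_add_one hv
    have h3 := dg_erase_self (G := G) hv
    rw [h3]
    unfold dg
    convert h2 using 2
    omega

lemma peel (hG : HB G) {S : Finset V} {N : ℕ} (hS : N + 6 ≤ S.card) :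
    ∃ v ∈ S, ∃ R ⊆ S, v ∉ R ∧ (∀ w ∈ R, ¬ G.Adj v w) ∧ N ≤ R.card := by
  classical
  obtain ⟨v, hv, hd⟩ := exists_dg_le_five hG (S := S) (Finset.card_pos.mp (by omega))
  obtain ⟨R, h1, h2, h3, -, h4⟩ := nonnbrs (G := G) hv
  exact ⟨v, hv, R, h1, h2, h3, by omega⟩

lemma peel_ind (hG : HB G) {N k : ℕ} (h : ∀ S : Finset V, N ≤ S.card → IndS G S k)
    {S : Finset V} (hS : N + 6 ≤ S.card) : IndS G S (k + 1) := by
  classical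
  obtain ⟨v, hv, R, h1, h2, h3, h4⟩ := peel hG hS
  obtain ⟨I, hI1, hI2, hI3⟩ := h R h4
  refine ⟨insert v I, ?_, ind_insert hI2 (fun w hw => h3 w (hI1 hw)), ?_⟩
  · intro w hw
    rcases Finset.mem_insert.mp hw with rfl | hw
    · exact hv
    · exact h1 (hI1 hw)
  · rw [Finset.card_insert_of_notMem (fun h => h2 (hI1 h)), hI3]

lemma dg_insert_nonadj [DecidableEq V] {I : Finset V} {v x : V} (h : ¬ G.Adj v x) :
    dg G (insert v I) x = dg G I x := by
  classical
  unfold dg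
  rw [Finset.filter_insert, if_neg (fun h' => h h'.symm)]

lemma peel_good (hG : HB G) {N k t : ℕ}
    (h : ∀ S : Finset V, N ≤ S.card → Good G S k t ∨ IndS G S (k + 1))
    {S : Finset V} (hS : N + 6 ≤ S.card) : Good G S (k + 1) t ∨ IndS G S (k + 1 + 1) := by
  classical
  obtain ⟨v, hv, R, h1, h2, h3, h4⟩ := peel hG hS
  have hsub : ∀ I ⊆ R, insert v I ⊆ S := by
    intro I hI w hw
    rcases Finset.mem_insert.mp hw with rfl | hw
    · exact hv
    · exact h1 (hI hw)
  rcases h R h4 with ⟨I, hI1, hI2, hI3, x, hx1, hx2, hx3⟩ | ⟨I, hI1, hI2, hI3⟩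
  · left
    refine ⟨insert v I, hsub I hI1, ind_insert hI2 (fun w hw => h3 w (hI1 hw)), ?_, x, h1 hx1, ?_, ?_⟩
    · rw [Finset.card_insert_of_notMem (fun h => h2 (hI1 h)), hI3]
    · intro h
      rcases Finset.mem_insert.mp h with rfl | h
      · exact h2 hx1
      · exact hx2 h
    · rw [dg_insert_nonadj (h3 x hx1)]; exact hx3
  · right
    refine ⟨insert v I, hsub I hI1, ind_insert hI2 (fun w hw => h3 w (hI1 hw)), ?_⟩
    rw [Finset.card_insert_of_notMem (fun h => h2 (hI1 h)), hI3]

lemma exists_nonadj (hG : HB G) {S : Finset V} (hS : 5 ≤ S.card) :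
    ∃ x ∈ S, ∃ y ∈ S, x ≠ y ∧ ¬ G.Adj x y := by
  classical
  obtain ⟨T, hT, hTc⟩ := Finset.exists_subset_card_eq hS
  obtain ⟨x, hx, hd⟩ := exists_dg_le hG (S := T) (by omega) 3 (by omega)
  obtain ⟨R, h1, h2, h3, -, h4⟩ := nonnbrs (G := G) hx
  obtain ⟨y, hy⟩ := Finset.card_pos.mp (show 0 < R.card by omega)
  exact ⟨x, hT hx, y, hT (h1 hy), fun h => h2 (h ▸ hy), h3 y hy⟩

lemma ind_pair [DecidableEq V] {x y : V} (h : ¬ G.Adj x y) : Ind G {x, y} := by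
  refine ind_insert (I := {y}) ?_ (by simpa using h)
  intro a ha b hb
  rw [Finset.mem_singleton] at ha hb
  subst ha; subst hb
  exact G.loopless.irrefl _

lemma ind_two (hG : HB G) {S : Finset V} (hS : 5 ≤ S.card) : IndS G S 2 := by
  classical
  obtain ⟨x, hx, y, hy, hne, hadj⟩ := exists_nonadj hG hS
  refine ⟨{x, y}, ?_, ind_pair hadj, Finset.card_pair hne⟩
  intro z hz
  rcases Finset.mem_insert.mp hz with rfl | hz
  · exact hx
  · rw [Finset.mem_singleton.mp hz]; exact hy

lemma ind_three (hG : HB G) {S : Finset V} (hS : 10 ≤ S.card) : IndS G S 3 := by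
  classical
  obtain ⟨T, hT, hTc⟩ := Finset.exists_subset_card_eq hS
  obtain ⟨v, hv, hd⟩ := exists_dg_le hG (S := T) (by omega) 4 (by omega)
  obtain ⟨R, h1, h2, h3, -, h4⟩ := nonnbrs (G := G) hv
  obtain ⟨I, hI1, hI2, hI3⟩ := ind_two hG (S := R) (by omega)
  refine ⟨insert v I, ?_, ind_insert hI2 (fun w hw => h3 w (hI1 hw)), ?_⟩
  · intro w hw
    rcases Finset.mem_insert.mp hw with rfl | hw
    · exact hT hv
    · exact hT (h1 (hI1 hw))
  · rw [Finset.card_insert_of_notMem (fun h => h2 (hI1 h)), hI3]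

lemma sparse_ind (k : ℕ) : ∀ (S : Finset V) (j : ℕ), dsum G S ≤ 2 * k → j + k ≤ S.card → IndS G S j := by
  classical
  induction k with
  | zero =>
    intro S j h1 h2
    obtain ⟨T, hT, hTc⟩ := Finset.exists_subset_card_eq (show j ≤ S.card by omega)
    refine ⟨T, hT, ?_, hTc⟩
    intro x hx y hy hxy
    have h3 : dsum G S = 0 := by omega
    rw [dsum, Finset.sum_eq_zero_iff] at h3
    have h4 := h3 x (hT hx)
    rw [dg, Finset.card_eq_zero, Finset.filter_eq_empty_iff] at h4
    exact h4 (hT hy) hxy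
  | succ k ih =>
    intro S j h1 h2
    by_cases h : ∃ v ∈ S, 1 ≤ dg G S v
    · obtain ⟨v, hv, hd⟩ := h
      have h3 := dsum_erase (G := G) hv
      have h4 := Finset.card_erase_add_one hv
      obtain ⟨I, hI, hI2⟩ := ih (S.erase v) j (by omega) (by omega)
      exact ⟨I, hI.trans (Finset.erase_subset _ _), hI2⟩
    · push Not at h
      have : dsum G S = 0 := by
        rw [dsum, Finset.sum_eq_zero_iff]
        intro v hv
        have := h v hv
        omega
      exact ih S j (by omega) (by omega)

lemma dg_union_le [DecidableEq V] {A B S : Finset V} (hA : A ⊆ S) (hB : B ⊆ S) (hd : Disjoint A B) (x : V) :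
    dg G A x + dg G B x ≤ dg G S x := by
  classical
  unfold dg
  rw [← Finset.card_union_of_disjoint (Finset.disjoint_filter_filter hd)]
  apply Finset.card_le_card
  intro y hy
  simp only [Finset.mem_union, Finset.mem_filter] at hy ⊢
  rcases hy with h | h
  · exact ⟨hA h.1, h.2⟩
  · exact ⟨hB h.1, h.2⟩

lemma dg_full {A : Finset V} {x : V} (h : ∀ y ∈ A, G.Adj x y) : dg G A x = A.card := by
  classical
  unfold dg
  rw [Finset.filter_true_of_mem h]

lemma base_seven (hG : HB G) {S' : Finset V} (hS' : 10 ≤ S'.card) : Good G S' 3 2 ∨ IndS G S' 4 := by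
  classical
  obtain ⟨S, hSS, hS⟩ := Finset.exists_subset_card_eq hS'
  obtain ⟨T, hT1, hT2, hT3⟩ := ind_three hG (S := S) (by omega)
  have hU : (S \ T).card = 7 := by rw [Finset.card_sdiff_of_subset hT1]; omega
  have hdisj : Disjoint T (S \ T) := Finset.disjoint_sdiff
  by_cases h : ∃ x ∈ S \ T, ∃ t ∈ T, ¬ G.Adj x t
  · left
    obtain ⟨x, hx, t, ht, hxt⟩ := h
    rw [Finset.mem_sdiff] at hx
    refine ⟨T, hT1.trans hSS, hT2, hT3, x, hSS hx.1, hx.2, ?_⟩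
    rw [dg_erase ht, if_neg hxt]
    have h1 : dg G (T.erase t) x ≤ (T.erase t).card := Finset.card_filter_le _ _
    have h2 := Finset.card_erase_add_one ht
    omega
  · right
    push Not at h
    have hb := hG S (by omega)
    have hsum : dsum G S = ∑ v ∈ T, dg G S v + ∑ v ∈ S \ T, dg G S v := by
      rw [dsum, ← Finset.sum_union hdisj, Finset.union_sdiff_of_subset hT1]
    have h1 : T.card • 7 ≤ ∑ v ∈ T, dg G S v := by
      apply Finset.card_nsmul_le_sum
      intro v hv
      rw [← hU, ← dg_full (G := G) (x := v) (fun y hy => (h y hy v hv).symm)]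
      exact dg_mono Finset.sdiff_subset v
    have h2 : ∑ v ∈ S \ T, (3 + dg G (S \ T) v) ≤ ∑ v ∈ S \ T, dg G S v := by
      apply Finset.sum_le_sum
      intro v hv
      rw [← hT3, ← dg_full (G := G) (x := v) (fun y hy => h v hv y hy)]
      exact dg_union_le hT1 Finset.sdiff_subset hdisj v
    rw [Finset.sum_add_distrib, Finset.sum_const] at h2
    have h3 : dsum G (S \ T) = ∑ v ∈ S \ T, dg G (S \ T) v := rfl
    simp only [smul_eq_mul] at h1 h2
    obtain ⟨I, hI1, hI2⟩ := sparse_ind 3 (G := G) (S \ T) 4 (by omega) (by omega)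
    exact ⟨I, hI1.trans (Finset.sdiff_subset.trans hSS), hI2⟩

lemma base_four (hG : HB G) {S' : Finset V} (hS' : 12 ≤ S'.card) : Good G S' 3 1 := by
  classical
  obtain ⟨S, hSS, hS⟩ := Finset.exists_subset_card_eq hS'
  suffices Good G S 3 1 by
    obtain ⟨I, hI1, hI2, hI3, x, hx, hx2⟩ := this
    exact ⟨I, hI1.trans hSS, hI2, hI3, x, hSS hx, hx2⟩
  by_contra hno
  -- key: nonneighbourhoods are almost complete
  have key : ∀ v ∈ S, ∀ R ⊆ S, v ∉ R → (∀ w ∈ R, ¬ G.Adj v w) → ∀ x ∈ R,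
      R.card ≤ dg G R x + 2 := by
    intro v hv R hR hvR hRv x hx
    by_contra hlt
    obtain ⟨R', h1, h2, h3, -, h4⟩ := nonnbrs (G := G) hx
    obtain ⟨y, z, hy, hz, hyz⟩ := Finset.one_lt_card_iff.mp (show 1 < R'.card by omega)
    apply hno
    have hxy : x ≠ y := fun h => h2 (h ▸ hy)
    have hxz : x ≠ z := fun h => h2 (h ▸ hz)
    have hvx : v ≠ x := fun h => hvR (h ▸ hx)
    have hvy : v ≠ y := fun h => hvR (h ▸ h1 hy)
    have hvz : v ≠ z := fun h => hvR (h ▸ h1 hz)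
    refine ⟨{v, x, y}, ?_, ind_insert (ind_pair (h3 y hy)) ?_, ?_, z, hR (h1 hz), ?_, ?_⟩
    · intro w hw
      simp only [Finset.mem_insert, Finset.mem_singleton] at hw
      rcases hw with rfl | rfl | rfl
      · exact hv
      · exact hR hx
      · exact hR (h1 hy)
    · intro w hw
      simp only [Finset.mem_insert, Finset.mem_singleton] at hw
      rcases hw with rfl | rfl
      · exact hRv _ hx
      · exact hRv _ (h1 hy)
    · rw [Finset.card_eq_three]; exact ⟨v, x, y, hvx, hvy, hxy, rfl⟩
    · simp only [Finset.mem_insert, Finset.mem_singleton, not_or]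
      exact ⟨hvz.symm, hxz.symm, hyz.symm⟩
    · rw [dg_insert_nonadj (hRv z (h1 hz)), dg_insert_nonadj (h3 z hz)]
      exact (Finset.card_filter_le _ _).trans (by simp)
  have hdeg : ∀ v ∈ S, 5 ≤ dg G S v := by
    intro v hv
    by_contra hlt
    obtain ⟨R, h1, h2, h3, -, h4⟩ := nonnbrs (G := G) hv
    obtain ⟨R', hR', hR'c⟩ := Finset.exists_subset_card_eq (show 7 ≤ R.card by omega)
    obtain ⟨x, hx, hxd⟩ := exists_dg_le hG (S := R') (by omega) 4 (by omega)
    have := key v hv R' (hR'.trans h1) (fun h => h2 (hR' h)) (fun w hw => h3 w (hR' hw)) x hx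
    omega
  have hdeg5 : ∀ v ∈ S, dg G S v ≤ 5 := by
    intro v hv
    by_contra hlt
    have hb := hG S (by omega)
    have : ∑ v ∈ S, 5 < ∑ v ∈ S, dg G S v :=
      Finset.sum_lt_sum hdeg ⟨v, hv, by omega⟩
    rw [Finset.sum_const, hS, smul_eq_mul] at this
    have h3 : dsum G S = ∑ v ∈ S, dg G S v := rfl
    omega
  obtain ⟨v, hv⟩ := Finset.card_pos.mp (show 0 < S.card by omega)
  obtain ⟨R, h1, h2, h3, h3', h4⟩ := nonnbrs (G := G) hv
  have hv5 := hdeg5 v hv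
  have hv5' := hdeg v hv
  obtain ⟨x, hx, x', hx', hne, hadj⟩ := exists_nonadj hG (S := R) (by omega)
  set N := S.filter (fun w => G.Adj v w) with hN
  have hNc : N.card = dg G S v := rfl
  have hNS : N ⊆ S := Finset.filter_subset _ _
  have hRN : Disjoint R N := by
    rw [Finset.disjoint_left]
    intro w hw hw'
    exact h3 w hw (Finset.mem_filter.mp hw').2
  have hout : ∀ x ∈ R, dg G N x ≤ 1 := by
    intro x hx
    have a1 := key v hv R h1 h2 h3 x hx
    have a2 := dg_union_le (G := G) h1 hNS hRN x
    have a3 := hdeg5 x (h1 hx)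
    omega
  obtain ⟨y, hy, hy2⟩ : ∃ y ∈ N, y ∉ N.filter (fun w => G.Adj x w) ∪ N.filter (fun w => G.Adj x' w) := by
    by_contra! h
    have b1 := Finset.card_le_card (show N ⊆ _ from h)
    have b2 := Finset.card_union_le (N.filter (fun w => G.Adj x w)) (N.filter (fun w => G.Adj x' w))
    have b3 : (N.filter (fun w => G.Adj x w)).card ≤ 1 := hout x hx
    have b4 : (N.filter (fun w => G.Adj x' w)).card ≤ 1 := hout x' hx'
    omega
  simp only [Finset.mem_union, Finset.mem_filter, hy, true_and, not_or] at hy2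
  have hyx : y ≠ x := fun h => (Finset.disjoint_left.mp hRN) hx (h ▸ hy)
  have hyx' : y ≠ x' := fun h => (Finset.disjoint_left.mp hRN) hx' (h ▸ hy)
  have hvy : G.Adj v y := (Finset.mem_filter.mp hy).2
  apply hno
  refine ⟨{x, x', y}, ?_, ind_insert (ind_pair hy2.2) ?_, ?_, v, hv, ?_, ?_⟩
  · intro w hw
    simp only [Finset.mem_insert, Finset.mem_singleton] at hw
    rcases hw with rfl | rfl | rfl
    · exact h1 hx
    · exact h1 hx'
    · exact hNS hy
  · intro w hw
    simp only [Finset.mem_insert, Finset.mem_singleton] at hw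
    rcases hw with rfl | rfl
    · exact hadj
    · exact hy2.1
  · rw [Finset.card_eq_three]; exact ⟨x, x', y, hne, hyx.symm, hyx'.symm, rfl⟩
  · simp only [Finset.mem_insert, Finset.mem_singleton, not_or]
    exact ⟨fun h => h2 (h ▸ hx), fun h => h2 (h ▸ hx'), hvy.ne⟩
  · rw [dg_insert_nonadj (fun h => h3 x hx h.symm), dg_insert_nonadj (fun h => h3 x' hx' h.symm)]
    exact (Finset.card_filter_le _ _).trans (by simp)

lemma emb_good [Nonempty V] [Fintype W] (hH : HB H) {S : Finset V} {k t d : ℕ}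
    (h : Good G S k t ∨ IndS G S (k + 1)) (hc : Fintype.card W = k + 1) (hk : 2 ≤ k)
    (hd : 6 * (k + 1) < 12 + (d + 1) * (k + 1)) (hdt : d + t ≤ k) : Emb G H := by
  rcases h with ⟨I, hI1, hI2, hI3, x, hx1, hx2, hx3⟩ | ⟨I, hI1, hI2, hI3⟩
  · obtain ⟨u, -, hu⟩ := exists_dg_le hH (S := (Finset.univ : Finset W))
      (by rw [Finset.card_univ]; omega) d (by rw [Finset.card_univ, hc]; exact hd)
    exact emb_pack hI2 hx2 (by omega) (u := u) (by omega)
  · exact emb_ind hI2 (by omega)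

theorem emb_all [Fintype V] [Fintype W] (hG : HB G) (hH : HB H)
    (hc : 4 * Fintype.card W ≤ Fintype.card V) : Emb G H := by
  classical
  by_cases h8 : 8 ≤ Fintype.card W
  · exact emb_large hG hH h8 hc
  by_cases h0 : Fintype.card W = 0
  · have : IsEmpty W := Fintype.card_eq_zero_iff.mp h0
    exact ⟨⟨fun w => isEmptyElim w, fun w => isEmptyElim w⟩, fun w => isEmptyElim w⟩
  have : Nonempty V := Fintype.card_pos_iff.mp (by omega)
  have hcu : (Finset.univ : Finset V).card = Fintype.card V := Finset.card_univ
  have hcs : Fintype.card W ≤ 2 ∨ Fintype.card W = 3 ∨ Fintype.card W = 4 ∨ Fintype.card W = 5 ∨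
    Fintype.card W = 6 ∨ Fintype.card W = 7 := by omega
  rcases hcs with h | h | h | h | h | h
  · by_cases h1 : Fintype.card W = 1
    · have v : V := Classical.arbitrary V
      refine emb_ind (I := {v}) (V := V) ?_ (by simp [h1])
      intro a ha b hb
      rw [Finset.mem_singleton] at ha hb
      subst ha; subst hb
      exact G.loopless.irrefl _
    · obtain ⟨I, -, hI, hIc⟩ := ind_two hG (S := (Finset.univ : Finset V)) (by omega)
      exact emb_ind hI (by omega)
  · obtain ⟨I, -, hI, hIc⟩ := ind_three hG (S := (Finset.univ : Finset V)) (by omega)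
    exact emb_ind hI (by omega)
  · obtain ⟨I, -, hI, hIc⟩ := peel_ind hG (N := 10) (k := 3) (fun S hS => ind_three hG hS)
      (S := (Finset.univ : Finset V)) (by omega)
    exact emb_ind hI (by omega)
  · have h1 := peel_good hG (N := 12) (k := 3) (t := 1) (fun S hS => Or.inl (base_four hG hS))
      (S := (Finset.univ : Finset V)) (by omega)
    exact emb_good hH h1 (by omega) (by omega) (d := 3) (by norm_num) (by norm_num)
  · have h1 := peel_good hG (N := 18) (k := 4) (t := 1) (fun S hS =>
        peel_good hG (N := 12) (k := 3) (t := 1) (fun S hS => Or.inl (base_four hG hS)) hS)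
      (S := (Finset.univ : Finset V)) (by omega)
    exact emb_good hH h1 (by omega) (by omega) (d := 4) (by norm_num) (by norm_num)
  · have h1 := peel_good hG (N := 22) (k := 5) (t := 2) (fun S hS =>
        peel_good hG (N := 16) (k := 4) (t := 2) (fun S hS =>
          peel_good hG (N := 10) (k := 3) (t := 2) (fun S hS => base_seven hG hS) hS) hS)
      (S := (Finset.univ : Finset V)) (by omega)
    exact emb_good hH h1 (by omega) (by omega) (d := 4) (by norm_num) (by norm_num)

end Comb

/-- For every `n`-vertex planar graph `G₁` and every planar graph `G₂` with at most
`n/4` vertices there is an injective map from `V(G₂)` to `V(G₁)` generating no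
shared edge. -/
theorem exists_embedding_no_shared_edge {V₁ V₂ : Type} [Fintype V₁] [Fintype V₂]
    (G₁ : SimpleGraph V₁) (G₂ : SimpleGraph V₂) (n : ℕ)
    (hn : Fintype.card V₁ = n)
    (hplanar₁ : Nonempty (PlanarDrawing G₁)) (hplanar₂ : Nonempty (PlanarDrawing G₂))
    (hcard : 4 * Fintype.card V₂ ≤ n) :
    ∃ f : V₂ ↪ V₁, ∀ a b : V₂, G₂.Adj a b → ¬ G₁.Adj (f a) (f b) := by
  obtain ⟨D₁⟩ := hplanar₁
  obtain ⟨D₂⟩ := hplanar₂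
  exact emb_all D₁.toC.hb D₂.toC.hb (by omega)
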